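/- arXiv:0909.4232 — 6 statements merged into one kernel-verified Lean document; each statement's English description precedes it below -/
import Mathlib

section
/- For every real ν, the Macdonald function of imaginary order has the asymptotic behaviour K_{iν}(x) ~ √(π/(2x)) · e^{−x} as x → +∞; precisely, K_{iν}(x) · e^{x} · √(2x/π) → 1 as x → +∞, and moreover K_{iν}(x) · e^{x} · √(2x/π) − 1 = O(1/x) as x → +∞. -/
open Real Filter Asymptotics

/-- The Macdonald function of imaginary order: `K_{iν}(x) = ∫_0^∞ e^{-x cosh t} cos(ν t) dt`. -/
noncomputable def Kim (ν x : ℝ) : ℝ :=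
  ∫ t in Set.Ioi (0 : ℝ), Real.exp (-x * Real.cosh t) * Real.cos (ν * t)

/-!
The substitution `t = 2 arsinh y` turns `cosh t - 1` into `2 y ^ 2`, so that `K_{iν}(x) e ^ x` is
the integral of an amplitude against the exact Gaussian `exp (-2 x y ^ 2)`. The amplitude is
`1 + O(y ^ 2)` uniformly on the half-line, and the second moment of the Gaussian is smaller than
its mass by a factor `4 x`.
-/

section GaussianLaplace

open MeasureTheory

theorem integral_sq_mul_exp_neg_mul_sq_Ioi {b : ℝ} (hb : 0 < b) :
    ∫ y in Set.Ioi (0 : ℝ), y ^ 2 * exp (-b * y ^ 2) = √(π / b) / (4 * b) := by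
  have gamma_three_halves : Gamma (3 / 2) = √π / 2 := by
    rw [show (3 / 2 : ℝ) = 1 / 2 + 1 by norm_num, Gamma_add_one (by norm_num), Gamma_one_half_eq]
    ring
  have rpow_three_halves : b ^ (-(3 / 2) : ℝ) = (b * √b)⁻¹ := by
    rw [rpow_neg hb.le, show (3 / 2 : ℝ) = 1 + 1 / 2 by norm_num, rpow_add hb, rpow_one,
      ← sqrt_eq_rpow]
  have moment := integral_rpow_mul_exp_neg_mul_rpow two_pos (by norm_num : (-1 : ℝ) < 2) hb
  norm_num only [rpow_two, neg_div] at moment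
  rw [moment, gamma_three_halves, rpow_three_halves, sqrt_div pi_pos.le]
  field_simp
  norm_num

theorem integrable_sq_mul_exp_neg_mul_sq {b : ℝ} (hb : 0 < b) :
    Integrable fun y : ℝ => y ^ 2 * exp (-b * y ^ 2) := by
  simpa only [rpow_two] using
    integrable_rpow_mul_exp_neg_mul_sq hb (by norm_num : (-1 : ℝ) < 2)

variable {E : Type*} [NormedAddCommGroup E] [NormedSpace ℝ E] [CompleteSpace E]

theorem norm_integral_exp_neg_mul_sq_smul_sub_le {b M : ℝ} {g : ℝ → E} {a : E} (hb : 0 < b)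
    (hg : AEStronglyMeasurable g (volume.restrict (Set.Ioi 0)))
    (hga : ∀ y, 0 < y → ‖g y - a‖ ≤ M * y ^ 2) :
    ‖(∫ y in Set.Ioi (0 : ℝ), exp (-b * y ^ 2) • g y) - (√(π / b) / 2) • a‖
      ≤ M * (√(π / b) / (4 * b)) := by
  have gaussian_smul_integrable :
      IntegrableOn (fun y : ℝ => exp (-b * y ^ 2) • a) (Set.Ioi 0) :=
    ((integrable_exp_neg_mul_sq hb).smul_const a).integrableOn
  have majorant_integrable :
      IntegrableOn (fun y : ℝ => M * (y ^ 2 * exp (-b * y ^ 2))) (Set.Ioi 0) :=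
    ((integrable_sq_mul_exp_neg_mul_sq hb).const_mul M).integrableOn
  have error_le : ∀ᵐ y ∂volume.restrict (Set.Ioi (0 : ℝ)),
      ‖exp (-b * y ^ 2) • (g y - a)‖ ≤ M * (y ^ 2 * exp (-b * y ^ 2)) := by
    filter_upwards [ae_restrict_mem measurableSet_Ioi] with y hy
    calc ‖exp (-b * y ^ 2) • (g y - a)‖ = exp (-b * y ^ 2) * ‖g y - a‖ := by
          rw [norm_smul, norm_of_nonneg (exp_nonneg _)]
      _ ≤ exp (-b * y ^ 2) * (M * y ^ 2) := by gcongr; exact hga y hy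
      _ = M * (y ^ 2 * exp (-b * y ^ 2)) := by ring
  have error_integrable :
      IntegrableOn (fun y : ℝ => exp (-b * y ^ 2) • (g y - a)) (Set.Ioi 0) := by
    refine majorant_integrable.mono' ?_ error_le
    exact (by fun_prop : Continuous fun y : ℝ => exp (-b * y ^ 2)).aestronglyMeasurable.smul
      (hg.sub aestronglyMeasurable_const)
  have integral_eq : ∫ y in Set.Ioi (0 : ℝ), exp (-b * y ^ 2) • g y
      = (∫ y in Set.Ioi (0 : ℝ), exp (-b * y ^ 2) • (g y - a)) + (√(π / b) / 2) • a := by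
    rw [← integral_gaussian_Ioi b, ← integral_smul_const,
      ← integral_add error_integrable gaussian_smul_integrable]
    simp only [← smul_add, sub_add_cancel]
  rw [integral_eq, add_sub_cancel_right, ← integral_sq_mul_exp_neg_mul_sq_Ioi hb,
    ← integral_const_mul]
  exact norm_integral_le_of_norm_le majorant_integrable error_le

end GaussianLaplace

theorem integral_Ioi_arsinh {E : Type*} [NormedAddCommGroup E] [NormedSpace ℝ E] (f : ℝ → E)
    (a : ℝ) :
    ∫ t in Set.Ioi (arsinh a), f t = ∫ y in Set.Ioi a, (√(1 + y ^ 2))⁻¹ • f (arsinh y) := by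
  have image_Ioi : arsinh '' Set.Ioi a = Set.Ioi (arsinh a) := sinhOrderIso.symm.image_Ioi a
  rw [← image_Ioi, MeasureTheory.integral_image_eq_integral_abs_deriv_smul measurableSet_Ioi
    (fun y _ => (hasDerivAt_arsinh y).hasDerivWithinAt) arsinh_injective.injOn]
  simp only [abs_inv, abs_of_nonneg (sqrt_nonneg _)]

theorem cosh_two_mul_arsinh (y : ℝ) : cosh (2 * arsinh y) = 1 + 2 * y ^ 2 := by
  rw [cosh_two_mul, cosh_sq', sinh_arsinh]
  ring

theorem arsinh_sq_le_sq (y : ℝ) : arsinh y ^ 2 ≤ y ^ 2 := by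
  rw [sq_le_sq, ← sinh_arsinh y, abs_sinh, arsinh_sinh]
  exact self_le_sinh_iff.2 (abs_nonneg _)

theorem one_sub_half_le_inv_sqrt_one_add {s : ℝ} (hs : -1 < s) : 1 - s / 2 ≤ (√(1 + s))⁻¹ := by
  have one_add_pos : 0 < 1 + s := by linarith
  have sqrt_one_add_pos : 0 < √(1 + s) := sqrt_pos.2 one_add_pos
  have factored : 1 - (1 - s / 2) * √(1 + s) = (√(1 + s) - 1) ^ 2 * (√(1 + s) + 2) / 2 := by
    linear_combination -√(1 + s) / 2 * sq_sqrt one_add_pos.le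
  have factored_nonneg : 0 ≤ (√(1 + s) - 1) ^ 2 * (√(1 + s) + 2) / 2 := by positivity
  rw [← one_div, le_div_iff₀ sqrt_one_add_pos]
  linarith

theorem kim_mul_exp_eq_integral (ν x : ℝ) :
    Kim ν x * exp x = 2 * ∫ y in Set.Ioi (0 : ℝ),
      exp (-(2 * x) * y ^ 2) * ((√(1 + y ^ 2))⁻¹ * cos (2 * ν * arsinh y)) := by
  have rescale := MeasureTheory.integral_comp_mul_left_Ioi
    (fun t => exp (-x * cosh t) * cos (ν * t)) 0 two_pos
  have substitute := integral_Ioi_arsinh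
    (fun t => exp (-x * cosh (2 * t)) * cos (ν * (2 * t))) 0
  rw [arsinh_zero, rescale, mul_zero, inv_smul_eq_iff₀ two_ne_zero] at substitute
  rw [Kim, substitute, smul_eq_mul, mul_assoc, ← MeasureTheory.integral_mul_const]
  congr 2 with y
  have exp_shift : exp (-x * cosh (2 * arsinh y)) * exp x = exp (-(2 * x) * y ^ 2) := by
    rw [cosh_two_mul_arsinh, ← exp_add]
    ring_nf
  rw [← exp_shift, smul_eq_mul]
  ring_nf

theorem abs_inv_sqrt_mul_cos_sub_one_le (ν y : ℝ) :
    |(√(1 + y ^ 2))⁻¹ * cos (2 * ν * arsinh y) - 1| ≤ (4 * ν ^ 2 + 1) / 2 * y ^ 2 := by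
  set w := (√(1 + y ^ 2))⁻¹
  set c := cos (2 * ν * arsinh y)
  have hw_nonneg : 0 ≤ w := by positivity
  have hw_le : w ≤ 1 := inv_le_one_of_one_le₀ (one_le_sqrt.2 (le_add_of_nonneg_right (sq_nonneg y)))
  have hw_ge : 1 - y ^ 2 / 2 ≤ w :=
    one_sub_half_le_inv_sqrt_one_add (neg_one_lt_zero.trans_le (sq_nonneg y))
  have hc_le : c ≤ 1 := cos_le_one _
  have hc_ge : 1 - 2 * ν ^ 2 * y ^ 2 ≤ c := by
    calc 1 - 2 * ν ^ 2 * y ^ 2 ≤ 1 - 2 * ν ^ 2 * arsinh y ^ 2 := by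
          gcongr 1 - 2 * ν ^ 2 * ?_
          exact arsinh_sq_le_sq y
      _ = 1 - (2 * ν * arsinh y) ^ 2 / 2 := by ring
      _ ≤ c := one_sub_sq_div_two_le_cos
  have hwc_le : w * c ≤ 1 := (mul_le_of_le_one_right hw_nonneg hc_le).trans hw_le
  calc |w * c - 1| = (1 - w) + w * (1 - c) := by
        rw [abs_of_nonpos (sub_nonpos.2 hwc_le)]
        ring
    _ ≤ (1 - w) + 1 * (1 - c) := by gcongr
    _ ≤ (4 * ν ^ 2 + 1) / 2 * y ^ 2 := by linarith

theorem abs_kim_mul_exp_sub_le (ν : ℝ) {x : ℝ} (hx : 0 < x) :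
    |Kim ν x * exp x - √(π / (2 * x))| ≤ (4 * ν ^ 2 + 1) / (8 * x) * √(π / (2 * x)) := by
  have amplitude_continuous :
      Continuous fun y => (√(1 + y ^ 2))⁻¹ * cos (2 * ν * arsinh y) := by
    have sqrt_ne_zero (y : ℝ) : √(1 + y ^ 2) ≠ 0 := by positivity
    have := continuous_arsinh
    fun_prop (disch := assumption)
  have laplace := norm_integral_exp_neg_mul_sq_smul_sub_le (mul_pos two_pos hx)
    amplitude_continuous.aestronglyMeasurable
    (fun y _ => abs_inv_sqrt_mul_cos_sub_one_le ν y)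
  simp only [smul_eq_mul, norm_eq_abs, mul_one] at laplace
  rw [kim_mul_exp_eq_integral]
  set I := ∫ y in Set.Ioi (0 : ℝ),
    exp (-(2 * x) * y ^ 2) * ((√(1 + y ^ 2))⁻¹ * cos (2 * ν * arsinh y))
  set s := √(π / (2 * x))
  calc |2 * I - s| = 2 * |I - s / 2| := by
        rw [show 2 * I - s = 2 * (I - s / 2) by ring, abs_mul, abs_two]
    _ ≤ 2 * ((4 * ν ^ 2 + 1) / 2 * (s / (4 * (2 * x)))) := by gcongr
    _ = (4 * ν ^ 2 + 1) / (8 * x) * s := by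
        field_simp
        ring

theorem abs_kim_mul_exp_mul_sqrt_sub_one_le (ν : ℝ) {x : ℝ} (hx : 0 < x) :
    |Kim ν x * exp x * √(2 * x / π) - 1| ≤ (4 * ν ^ 2 + 1) / (8 * x) := by
  have hs : 0 < √(π / (2 * x)) := by positivity
  rw [← inv_div π (2 * x), sqrt_inv, ← div_eq_mul_inv, div_sub_one hs.ne', abs_div,
    abs_of_pos hs, div_le_iff₀ hs]
  exact abs_kim_mul_exp_sub_le ν hx

theorem macdonald_asymptotic_at_top (ν : ℝ) :
    Tendsto (fun x : ℝ => Kim ν x * Real.exp x * Real.sqrt (2 * x / π)) atTop (nhds 1) ∧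
    (fun x : ℝ => Kim ν x * Real.exp x * Real.sqrt (2 * x / π) - 1) =O[atTop]
      (fun x : ℝ => 1 / x) := by
  have error_isBigO : (fun x : ℝ => Kim ν x * exp x * √(2 * x / π) - 1) =O[atTop]
      (fun x : ℝ => 1 / x) := by
    refine IsBigO.of_bound ((4 * ν ^ 2 + 1) / 8) ?_
    filter_upwards [eventually_gt_atTop (0 : ℝ)] with x hx
    rw [norm_eq_abs, norm_of_nonneg (by positivity), div_mul_div_comm, mul_one]
    exact abs_kim_mul_exp_mul_sqrt_sub_one_le ν hx
  have error_tendsto_zero := error_isBigO.trans_tendsto (tendsto_const_nhds.div_atTop tendsto_id)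
  exact ⟨tendsto_sub_nhds_zero_iff.1 error_tendsto_zero, error_isBigO⟩
end

section
/- For every real ν > 0 there exists a constant C > 0 such that for all x with 0 < x ≤ 1 one has | K_{iν}(x) − √(π/(ν · sinh(πν))) · cos( −ν · log(x/2) + arg Γ(iν) ) | ≤ C · x², where arg Γ(iν) is the argument of the complex number Γ(iν). In particular, as x → 0+, K_{iν}(x) = √(π/(ν sinh(πν))) · cos( −ν log(x/2) + arg Γ(iν) ) + O(x²). -/
/-!
The Macdonald function of complex order, `K_s(x) = ½ ∫_ℝ exp (-x cosh t + s t) dt`, is even in `s`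
and satisfies `2 s K_s = x (K_{s+1} - K_{s-1})`. Splitting `x cosh t = (x/2) e^t + (x/2) e^{-t}` and
dropping the second summand turns the integral into a Gamma integral, so that
`K_s ≈ L_s := ½ (x/2)^{-s} Γ(s)` when `re s > 1`. One use of the recurrence carries this
approximation down to `re s > 0`; a second one, together with `K_{s-1} = K_{1-s}` and
`2 s L_s = x L_{s+1}`, gives `K_s ≈ L_s + L_{-s}` in the strip `|re s| < 1`, up to `O(x²)` on the
imaginary axis. There `L_s` and `L_{-s}` are conjugate, and `|Γ(iν)|² = π / (ν sinh (πν))`.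
-/

open Real

open MeasureTheory

section GammaIntegral

lemma mellin_eq_integral_comp_exp {E : Type*} [NormedAddCommGroup E] [NormedSpace ℂ E]
    (f : ℝ → E) (s : ℂ) : mellin f s = ∫ t : ℝ, Complex.exp (s * t) • f (rexp t) := by
  have range_exp : rexp '' Set.univ = Set.Ioi 0 := by rw [Set.image_univ, Real.range_exp]
  rw [mellin, ← range_exp, integral_image_eq_integral_abs_deriv_smul MeasurableSet.univ
    (fun t _ ↦ (Real.hasDerivAt_exp t).hasDerivWithinAt) Real.exp_injective.injOn,
    Measure.restrict_univ]
  congr with t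
  rw [abs_of_pos (Real.exp_pos t), ← Complex.coe_smul, smul_smul,
    Complex.cpow_def_of_ne_zero (by simp), ← Complex.ofReal_log (Real.exp_pos t).le, Real.log_exp,
    Complex.ofReal_exp, ← Complex.exp_add]
  ring_nf

variable {a σ : ℝ} {s : ℂ}

lemma integral_cexp_neg_mul_exp_add_mul (ha : 0 < a) (hs : 0 < s.re) :
    ∫ t : ℝ, Complex.exp (-(a * Complex.exp t) + s * t) = (a : ℂ) ^ (-s) * Complex.Gamma s := by
  have gamma_integral := Complex.integral_cpow_mul_exp_neg_mul_Ioi hs ha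
  have mellin_exp := mellin_eq_integral_comp_exp (fun u ↦ Complex.exp (-(a * u : ℂ))) s
  rw [mellin] at mellin_exp
  simp only [smul_eq_mul, ← Complex.exp_add, Complex.ofReal_exp] at mellin_exp
  rw [gamma_integral, one_div, Complex.inv_cpow _ _ (by simp [Complex.arg_ofReal_of_nonneg ha.le,
    Real.pi_ne_zero.symm]), ← Complex.cpow_neg] at mellin_exp
  simpa only [add_comm] using mellin_exp.symm

lemma integral_exp_neg_mul_exp_add_mul (ha : 0 < a) (hσ : 0 < σ) :
    ∫ t : ℝ, rexp (-(a * rexp t) + σ * t) = a ^ (-σ) * Real.Gamma σ := by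
  apply Complex.ofReal_injective
  rw [← integral_complex_ofReal]
  simpa [Complex.ofReal_cpow ha.le, Complex.Gamma_ofReal] using
    integral_cexp_neg_mul_exp_add_mul (s := σ) ha (by simpa)

lemma integrable_exp_neg_mul_exp_add_mul (ha : 0 < a) (hσ : 0 < σ) :
    Integrable fun t : ℝ ↦ rexp (-(a * rexp t) + σ * t) := by
  apply Integrable.of_integral_ne_zero
  rw [integral_exp_neg_mul_exp_add_mul ha hσ]
  exact (mul_pos (Real.rpow_pos_of_pos ha _) (Real.Gamma_pos_of_pos hσ)).ne'

lemma norm_cexp_neg_mul_exp_add_mul (a : ℝ) (s : ℂ) (t : ℝ) :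
    ‖Complex.exp (-(a * Complex.exp t) + s * t)‖ = rexp (-(a * rexp t) + s.re * t) := by
  simp [Complex.norm_exp, Complex.exp_ofReal_re]

lemma integrable_cexp_neg_mul_exp_add_mul (ha : 0 < a) (hs : 0 < s.re) :
    Integrable fun t : ℝ ↦ Complex.exp (-(a * Complex.exp t) + s * t) :=
  (integrable_exp_neg_mul_exp_add_mul ha hs).mono'
    (by fun_prop : Continuous _).aestronglyMeasurable
    (.of_forall fun t ↦ (norm_cexp_neg_mul_exp_add_mul a s t).le)

end GammaIntegral

/-- The integrand `exp (-x cosh t + s t)` of the whole-line integral for the Macdonald function. -/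
noncomputable def macdonaldKernel (s : ℂ) (x t : ℝ) : ℂ :=
  Complex.exp (-(x * Complex.cosh t) + s * t)

/-- The Macdonald function (modified Bessel function of the second kind) `K_s(x)` of complex order
`s`, written as an integral over the whole line so that the order is shifted by multiplying the
integrand by exponentials. It is meaningful for `0 < x` only. -/
noncomputable def macdonaldK (s : ℂ) (x : ℝ) : ℂ :=
  (∫ t : ℝ, macdonaldKernel s x t) / 2

/-- The singular term `½ (x/2)^{-s} Γ(s)` of `macdonaldK s x` as `x → 0`. -/
noncomputable def macdonaldLead (s : ℂ) (x : ℝ) : ℂ :=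
  ((x / 2 : ℝ) : ℂ) ^ (-s) * Complex.Gamma s / 2

section Macdonald

variable {x : ℝ} {s : ℂ}

lemma norm_macdonaldKernel (s : ℂ) (x t : ℝ) :
    ‖macdonaldKernel s x t‖ = rexp (-(x * Real.cosh t) + s.re * t) := by
  simp [macdonaldKernel, Complex.norm_exp, Complex.cosh_ofReal_re]

lemma continuous_macdonaldKernel (s : ℂ) (x : ℝ) : Continuous (macdonaldKernel s x) := by
  unfold macdonaldKernel
  fun_prop

lemma half_mul_exp_le_mul_cosh (hx : 0 ≤ x) (t : ℝ) : x / 2 * rexp t ≤ x * Real.cosh t := by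
  rw [Real.cosh_eq]
  nlinarith [mul_nonneg hx (Real.exp_pos (-t)).le]

lemma integrable_macdonaldKernel (hx : 0 < x) (s : ℂ) : Integrable (macdonaldKernel s x) := by
  have gamma_integrable : Integrable fun t : ℝ ↦ rexp (-(x / 2 * rexp t) + (|s.re| + 1) * t) :=
    integrable_exp_neg_mul_exp_add_mul (by positivity) (by positivity)
  refine (gamma_integrable.add gamma_integrable.comp_neg).mono'
    (continuous_macdonaldKernel s x).aestronglyMeasurable (.of_forall fun t ↦ ?_)
  rw [norm_macdonaldKernel, Pi.add_apply]
  rcases le_total 0 t with ht | ht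
  · refine le_add_of_le_of_nonneg (Real.exp_le_exp.2 ?_) (Real.exp_pos _).le
    nlinarith [half_mul_exp_le_mul_cosh hx.le t, le_abs_self s.re]
  · refine le_add_of_nonneg_of_le (Real.exp_pos _).le (Real.exp_le_exp.2 ?_)
    have cosh_bound := half_mul_exp_le_mul_cosh hx.le (-t)
    rw [Real.cosh_neg] at cosh_bound
    nlinarith [neg_abs_le s.re]

lemma macdonaldK_neg (s : ℂ) (x : ℝ) : macdonaldK (-s) x = macdonaldK s x := by
  rw [macdonaldK, macdonaldK, ← integral_neg_eq_self]
  simp [macdonaldKernel]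

lemma macdonaldK_eq_integral_Ioi (hx : 0 < x) (s : ℂ) :
    macdonaldK s x =
      ∫ t in Set.Ioi (0 : ℝ), Complex.exp (-(x * Complex.cosh t)) * Complex.cosh (s * t) := by
  have integrable := integrable_macdonaldKernel hx s
  rw [macdonaldK, ← intervalIntegral.integral_Iic_add_Ioi (b := 0) integrable.integrableOn
    integrable.integrableOn, ← neg_zero, ← integral_comp_neg_Ioi, neg_zero,
    ← integral_add integrable.comp_neg.integrableOn integrable.integrableOn, ← integral_div]
  congr with t
  simp only [macdonaldKernel, Complex.cosh.eq_1 (s * t), Complex.exp_add, Complex.ofReal_neg,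
    Complex.cosh_neg, mul_neg]
  ring

lemma macdonaldK_mul_I (hx : 0 < x) (ν : ℝ) : macdonaldK (ν * Complex.I) x = Kim ν x := by
  rw [macdonaldK_eq_integral_Ioi hx, Kim, ← integral_complex_ofReal]
  congr with t
  rw [mul_right_comm, Complex.cosh_mul_I]
  simp

lemma macdonaldKernel_add (s w : ℂ) (x t : ℝ) :
    macdonaldKernel (s + w) x t = Complex.exp (w * t) * macdonaldKernel s x t := by
  rw [macdonaldKernel, macdonaldKernel, ← Complex.exp_add]
  ring_nf

lemma hasDerivAt_macdonaldKernel (s : ℂ) (x t : ℝ) :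
    HasDerivAt (macdonaldKernel s x)
      (s * macdonaldKernel s x t -
        x / 2 * (macdonaldKernel (s + 1) x t - macdonaldKernel (s - 1) x t)) t := by
  have exponent : HasDerivAt (fun z : ℂ ↦ -(x * Complex.cosh z) + s * z)
      (-(x * Complex.sinh t) + s * 1) t :=
    ((Complex.hasDerivAt_cosh t).const_mul (x : ℂ)).neg.add ((hasDerivAt_id _).const_mul s)
  refine exponent.cexp.comp_ofReal.congr_deriv ?_
  rw [sub_eq_add_neg s 1, macdonaldKernel_add, macdonaldKernel_add, one_mul, neg_one_mul,
    Complex.sinh, macdonaldKernel]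
  ring

lemma mul_macdonaldK_add_one_sub_macdonaldK_sub_one (hx : 0 < x) (s : ℂ) :
    x * (macdonaldK (s + 1) x - macdonaldK (s - 1) x) = 2 * s * macdonaldK s x := by
  have integrable := integrable_macdonaldKernel hx
  have shifted : Integrable fun t ↦
      (x / 2 : ℂ) * (macdonaldKernel (s + 1) x t - macdonaldKernel (s - 1) x t) :=
    ((integrable (s + 1)).sub (integrable (s - 1))).const_mul _
  have integral_deriv := integral_eq_zero_of_hasDerivAt_of_integrable
    (hasDerivAt_macdonaldKernel s x) (((integrable s).const_mul s).sub shifted) (integrable s)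
  rw [integral_sub ((integrable s).const_mul s) shifted, integral_const_mul, integral_const_mul,
    integral_sub (integrable (s + 1)) (integrable (s - 1))] at integral_deriv
  simp only [macdonaldK]
  linear_combination -integral_deriv

lemma mul_macdonaldK_one_add_sub_macdonaldK_one_sub (hx : 0 < x) (s : ℂ) :
    x * (macdonaldK (1 + s) x - macdonaldK (1 - s) x) = 2 * s * macdonaldK s x := by
  rw [← mul_macdonaldK_add_one_sub_macdonaldK_sub_one hx, ← macdonaldK_neg (s - 1), neg_sub,
    add_comm]

lemma mul_macdonaldLead_add_one (hx : 0 < x) (hs : s ≠ 0) :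
    x * macdonaldLead (s + 1) x = 2 * s * macdonaldLead s x := by
  have x_ne_zero : (x : ℂ) ≠ 0 := by exact_mod_cast hx.ne'
  rw [macdonaldLead, macdonaldLead, Complex.Gamma_add_one s hs, neg_add,
    Complex.cpow_add _ _ (by simpa using hx.ne'), Complex.cpow_neg_one]
  push_cast
  field_simp

lemma macdonaldLead_conj (hx : 0 ≤ x) (s : ℂ) :
    macdonaldLead (starRingEnd ℂ s) x = starRingEnd ℂ (macdonaldLead s x) := by
  have arg_ne_pi : ((x / 2 : ℝ) : ℂ).arg ≠ π := by
    rw [Complex.arg_ofReal_of_nonneg (by positivity)]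
    exact Real.pi_ne_zero.symm
  have cpow_conj := Complex.cpow_conj ((x / 2 : ℝ) : ℂ) (-s) arg_ne_pi
  rw [Complex.conj_ofReal] at cpow_conj
  rw [macdonaldLead, macdonaldLead, Complex.Gamma_conj, ← map_neg, cpow_conj, map_div₀,
    map_mul, map_ofNat]

lemma norm_macdonaldK_le (hx : 0 < x) (hs : 0 < s.re) :
    ‖macdonaldK s x‖ ≤ (x / 2) ^ (-s.re) * Real.Gamma s.re / 2 := by
  rw [macdonaldK, norm_div, Complex.norm_ofNat,
    ← integral_exp_neg_mul_exp_add_mul (half_pos hx) hs]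
  gcongr
  refine norm_integral_le_of_norm_le (integrable_exp_neg_mul_exp_add_mul (half_pos hx) hs)
    (.of_forall fun t ↦ ?_)
  rw [norm_macdonaldKernel]
  gcongr rexp (-?_ + _)
  exact half_mul_exp_le_mul_cosh hx.le t

lemma norm_macdonaldKernel_sub_le (hx : 0 ≤ x) (s : ℂ) (t : ℝ) :
    ‖macdonaldKernel s x t - Complex.exp (-((x / 2 : ℝ) * Complex.exp t) + s * t)‖ ≤
      x / 2 * rexp (-(x / 2 * rexp t) + (s.re - 1) * t) := by
  have factor : macdonaldKernel s x t -
      Complex.exp (-((x / 2 : ℝ) * Complex.exp t) + s * t) =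
      ((rexp (-(x / 2 * rexp (-t))) - 1 : ℝ) : ℂ) *
        Complex.exp (-((x / 2 : ℝ) * Complex.exp t) + s * t) := by
    push_cast
    rw [macdonaldKernel, sub_mul, ← Complex.exp_add, Complex.cosh]
    ring_nf
  have tail_le : |rexp (-(x / 2 * rexp (-t))) - 1| ≤ x / 2 * rexp (-t) := by
    have tail_nonneg : 0 ≤ x / 2 * rexp (-t) := by positivity
    rw [abs_sub_comm, abs_of_nonneg (sub_nonneg.2 (Real.exp_le_one_iff.2 (by linarith)))]
    linarith [Real.add_one_le_exp (-(x / 2 * rexp (-t)))]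
  calc _ = |rexp (-(x / 2 * rexp (-t))) - 1| * rexp (-(x / 2 * rexp t) + s.re * t) := by
        rw [factor, norm_mul, norm_cexp_neg_mul_exp_add_mul, Complex.norm_real, Real.norm_eq_abs]
    _ ≤ x / 2 * rexp (-t) * rexp (-(x / 2 * rexp t) + s.re * t) := by gcongr
    _ = _ := by rw [mul_assoc, ← Real.exp_add]; ring_nf

lemma norm_macdonaldK_sub_macdonaldLead_le_of_one_lt_re (hx : 0 < x) (hs : 1 < s.re) :
    ‖macdonaldK s x - macdonaldLead s x‖ ≤ (x / 2) ^ (2 - s.re) * Real.Gamma (s.re - 1) / 2 := by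
  have half_x_pos : 0 < x / 2 := half_pos hx
  have re_pos : 0 < s.re := one_pos.trans hs
  have re_sub_pos : 0 < s.re - 1 := sub_pos.2 hs
  rw [macdonaldK, macdonaldLead, ← integral_cexp_neg_mul_exp_add_mul half_x_pos re_pos, ← sub_div,
    ← integral_sub (integrable_macdonaldKernel hx s)
      (integrable_cexp_neg_mul_exp_add_mul half_x_pos re_pos), norm_div, Complex.norm_ofNat]
  gcongr
  calc _ ≤ ∫ t : ℝ, x / 2 * rexp (-(x / 2 * rexp t) + (s.re - 1) * t) :=
        norm_integral_le_of_norm_le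
          ((integrable_exp_neg_mul_exp_add_mul half_x_pos re_sub_pos).const_mul _)
          (.of_forall (norm_macdonaldKernel_sub_le hx.le s))
    _ = _ := by
        rw [integral_const_mul, integral_exp_neg_mul_exp_add_mul half_x_pos re_sub_pos,
          show 2 - s.re = 1 + -(s.re - 1) by ring, Real.rpow_add half_x_pos, Real.rpow_one,
          mul_assoc]

lemma norm_macdonaldK_sub_macdonaldLead_le (hx : 0 < x) (hs : 0 < s.re) :
    ‖macdonaldK s x - macdonaldLead s x‖ ≤
      x / 2 * ((x / 2) ^ (1 - s.re) * Real.Gamma s.re / 2 + ‖macdonaldK (s - 1) x‖) / s.re := by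
  have s_ne_zero : s ≠ 0 := fun h ↦ by simp [h] at hs
  have descend : macdonaldK s x - macdonaldLead s x =
      (x / 2 : ℝ) *
        ((macdonaldK (s + 1) x - macdonaldLead (s + 1) x) - macdonaldK (s - 1) x) / s := by
    push_cast
    field_simp
    linear_combination
      -mul_macdonaldK_add_one_sub_macdonaldK_sub_one hx s + mul_macdonaldLead_add_one hx s_ne_zero
  have shifted := norm_macdonaldK_sub_macdonaldLead_le_of_one_lt_re (s := s + 1) hx (by simpa)
  rw [Complex.add_re, Complex.one_re, add_sub_cancel_right, show 2 - (s.re + 1) = 1 - s.re by ring]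
    at shifted
  rw [descend, norm_div, norm_mul, Complex.norm_of_nonneg (half_pos hx).le]
  gcongr
  · exact (norm_sub_le _ _).trans (by gcongr)
  · exact Complex.re_le_norm s

lemma norm_macdonaldK_le_of_abs_re_lt_one (hx : 0 < x) (hs : s ≠ 0) (hre : |s.re| < 1) :
    ‖macdonaldK s x‖ ≤ ((x / 2) ^ (-s.re) * Real.Gamma (1 + s.re) +
      (x / 2) ^ s.re * Real.Gamma (1 - s.re)) / (2 * ‖s‖) := by
  obtain ⟨neg_one_lt, lt_one⟩ := abs_lt.1 hre
  have upper := norm_macdonaldK_le (s := 1 + s) hx (by simp; linarith)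
  have lower := norm_macdonaldK_le (s := 1 - s) hx (by simp; linarith)
  simp only [Complex.add_re, Complex.sub_re, Complex.one_re, neg_sub, neg_add'] at upper lower
  have absorb_half (e : ℝ) : x / 2 * (x / 2) ^ (e - 1) = (x / 2) ^ e := by
    rw [Real.rpow_sub_one (half_pos hx).ne', mul_div_cancel₀ _ (half_pos hx).ne']
  have average : macdonaldK s x =
      (x / 2 : ℝ) * (macdonaldK (1 + s) x - macdonaldK (1 - s) x) / s := by
    have recurrence := mul_macdonaldK_one_add_sub_macdonaldK_one_sub hx s
    push_cast
    field_simp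
    linear_combination -recurrence
  calc ‖macdonaldK s x‖
      = x / 2 * ‖macdonaldK (1 + s) x - macdonaldK (1 - s) x‖ / ‖s‖ := by
        rw [average, norm_div, norm_mul, Complex.norm_of_nonneg (half_pos hx).le]
    _ ≤ x / 2 * ((x / 2) ^ (-1 - s.re) * Real.Gamma (1 + s.re) / 2 +
          (x / 2) ^ (s.re - 1) * Real.Gamma (1 - s.re) / 2) / ‖s‖ := by
        gcongr
        exact (norm_sub_le _ _).trans (add_le_add upper lower)
    _ = _ := by
        rw [← absorb_half (-s.re), ← absorb_half s.re, neg_sub_comm]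
        ring

lemma norm_macdonaldK_sub_macdonaldLead_add_macdonaldLead_neg_le (hx : 0 < x) (hs : s ≠ 0)
    (hre : |s.re| < 1) :
    ‖macdonaldK s x - (macdonaldLead s x + macdonaldLead (-s) x)‖ ≤ x ^ 2 / (4 * ‖s‖) *
      (((x / 2) ^ (-s.re) * Real.Gamma (1 + s.re) / 2 + ‖macdonaldK s x‖) / (1 + s.re) +
        ((x / 2) ^ s.re * Real.Gamma (1 - s.re) / 2 + ‖macdonaldK s x‖) / (1 - s.re)) := by
  obtain ⟨neg_one_lt, lt_one⟩ := abs_lt.1 hre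
  have upper := norm_macdonaldK_sub_macdonaldLead_le (s := 1 + s) hx (by simp; linarith)
  have lower := norm_macdonaldK_sub_macdonaldLead_le (s := 1 - s) hx (by simp; linarith)
  rw [add_sub_cancel_left, Complex.add_re, Complex.one_re, sub_add_cancel_left] at upper
  rw [sub_sub_cancel_left, macdonaldK_neg, Complex.sub_re, Complex.one_re, sub_sub_cancel] at lower
  have average : macdonaldK s x - (macdonaldLead s x + macdonaldLead (-s) x) =
      (x / 2 : ℝ) * ((macdonaldK (1 + s) x - macdonaldLead (1 + s) x) -
        (macdonaldK (1 - s) x - macdonaldLead (1 - s) x)) / s := by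
    have lead_upper := mul_macdonaldLead_add_one hx hs
    have lead_lower := mul_macdonaldLead_add_one hx (neg_ne_zero.2 hs)
    rw [add_comm] at lead_upper
    rw [neg_add_eq_sub] at lead_lower
    push_cast
    field_simp
    linear_combination -mul_macdonaldK_one_add_sub_macdonaldK_one_sub hx s + lead_upper - lead_lower
  calc _ = x / 2 * ‖(macdonaldK (1 + s) x - macdonaldLead (1 + s) x) -
        (macdonaldK (1 - s) x - macdonaldLead (1 - s) x)‖ / ‖s‖ := by
        rw [average, norm_div, norm_mul, Complex.norm_of_nonneg (half_pos hx).le]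
    _ ≤ x / 2 * (_ + _) / ‖s‖ := by
        gcongr
        exact (norm_sub_le _ _).trans (add_le_add upper lower)
    _ = _ := by ring

lemma norm_macdonaldK_sub_macdonaldLead_add_macdonaldLead_neg_le_of_re_eq_zero (hx : 0 < x)
    (hs : s ≠ 0) (hre : s.re = 0) :
    ‖macdonaldK s x - (macdonaldLead s x + macdonaldLead (-s) x)‖ ≤
      (1 + 2 / ‖s‖) / (4 * ‖s‖) * x ^ 2 := by
  have norm_le := norm_macdonaldK_le_of_abs_re_lt_one hx hs (by simp [hre])
  have approx := norm_macdonaldK_sub_macdonaldLead_add_macdonaldLead_neg_le hx hs (by simp [hre])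
  simp only [hre, neg_zero, Real.rpow_zero, add_zero, sub_zero, Real.Gamma_one, mul_one, div_one]
    at norm_le approx
  calc _ ≤ x ^ 2 / (4 * ‖s‖) * ((1 / 2 + ‖macdonaldK s x‖) + (1 / 2 + ‖macdonaldK s x‖)) := approx
    _ ≤ x ^ 2 / (4 * ‖s‖) * ((1 / 2 + (1 + 1) / (2 * ‖s‖)) + (1 / 2 + (1 + 1) / (2 * ‖s‖))) := by
      gcongr
    _ = _ := by ring

end Macdonald

section ImaginaryAxis

variable {ν x : ℝ}

lemma norm_Gamma_mul_I (hν : ν ≠ 0) :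
    ‖Complex.Gamma (ν * Complex.I)‖ = √(π / (ν * Real.sinh (π * ν))) := by
  set s : ℂ := ν * Complex.I with hs
  have s_ne_zero : s ≠ 0 := by simpa [hs]
  have reflected : Complex.Gamma (1 - s) = -s * starRingEnd ℂ (Complex.Gamma s) := by
    have conj_eq_neg : starRingEnd ℂ s = -s := by simp [hs]
    rw [← Complex.Gamma_conj, conj_eq_neg, ← Complex.Gamma_add_one _ (neg_ne_zero.2 s_ne_zero),
      neg_add_eq_sub]
  have reflection := congrArg norm (Complex.Gamma_mul_Gamma_one_sub s)
  have norm_s : ‖s‖ = |ν| := by simp [hs]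
  have norm_sin : ‖Complex.sin (π * s)‖ = |Real.sinh (π * ν)| := by
    rw [hs, ← mul_assoc, ← Complex.ofReal_mul, Complex.sin_mul_I, norm_mul, Complex.norm_I, mul_one,
      ← Complex.ofReal_sinh, Complex.norm_real, Real.norm_eq_abs]
  rw [reflected, norm_mul, norm_mul, norm_neg, Complex.norm_conj, norm_div, norm_s, norm_sin,
    Complex.norm_of_nonneg Real.pi_pos.le] at reflection
  have denominator_pos : 0 < ν * Real.sinh (π * ν) := by
    rcases hν.lt_or_gt with neg | pos
    · exact mul_pos_of_neg_of_neg neg (Real.sinh_neg_iff.2 (mul_neg_of_pos_of_neg pi_pos neg))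
    · exact mul_pos pos (Real.sinh_pos_iff.2 (mul_pos pi_pos pos))
  symm
  rw [Real.sqrt_eq_iff_mul_self_eq (by positivity) (norm_nonneg _), ← abs_of_pos denominator_pos,
    abs_mul, mul_comm |ν|, ← div_div, ← reflection]
  field_simp

lemma re_cpow_mul_I_mul (hx : 0 < x) (ν : ℝ) (z : ℂ) :
    ((x : ℂ) ^ (ν * Complex.I) * z).re = ‖z‖ * Real.cos (ν * Real.log x + z.arg) := by
  have polar : (x : ℂ) ^ (ν * Complex.I) * z =
      ‖z‖ * Complex.exp ((ν * Real.log x + z.arg : ℝ) * Complex.I) := by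
    nth_rw 1 [← Complex.norm_mul_exp_arg_mul_I z]
    rw [Complex.cpow_def_of_ne_zero (by exact_mod_cast hx.ne'), ← Complex.ofReal_log hx.le,
      mul_left_comm, ← Complex.exp_add]
    push_cast
    ring_nf
  rw [polar, Complex.re_ofReal_mul, Complex.exp_ofReal_mul_I_re]

lemma macdonaldLead_mul_I_add_macdonaldLead_neg (hx : 0 < x) (hν : ν ≠ 0) :
    macdonaldLead (ν * Complex.I) x + macdonaldLead (-(ν * Complex.I)) x =
      (√(π / (ν * Real.sinh (π * ν))) *
        Real.cos (-ν * Real.log (x / 2) + Complex.arg (Complex.Gamma (ν * Complex.I))) : ℝ) := by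
  have conj_eq_neg : starRingEnd ℂ (ν * Complex.I) = -(ν * Complex.I) := by simp
  rw [← conj_eq_neg, macdonaldLead_conj hx.le, Complex.add_conj, ← norm_Gamma_mul_I hν,
    ← re_cpow_mul_I_mul (half_pos hx), macdonaldLead, ← neg_mul, ← Complex.ofReal_neg,
    Complex.div_ofNat_re]
  push_cast
  ring

end ImaginaryAxis

theorem macdonald_asymptotic_at_zero_general {ν x : ℝ} (hν : ν ≠ 0) (hx : 0 < x) :
    |Kim ν x - √(π / (ν * Real.sinh (π * ν))) *
      Real.cos (-ν * Real.log (x / 2) + Complex.arg (Complex.Gamma (ν * Complex.I)))|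
      ≤ (1 + 2 / |ν|) / (4 * |ν|) * x ^ 2 := by
  have approx := norm_macdonaldK_sub_macdonaldLead_add_macdonaldLead_neg_le_of_re_eq_zero
    (s := ν * Complex.I) hx (by simpa) (by simp)
  rwa [macdonaldK_mul_I hx, macdonaldLead_mul_I_add_macdonaldLead_neg hx hν, ← Complex.ofReal_sub,
    Complex.norm_real, Real.norm_eq_abs, norm_mul, Complex.norm_I, mul_one, Complex.norm_real,
    Real.norm_eq_abs] at approx

theorem macdonald_asymptotic_at_zero (ν : ℝ) (hν : 0 < ν) :
    ∃ C > 0, ∀ x : ℝ, 0 < x → x ≤ 1 →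
      |Kim ν x - Real.sqrt (π / (ν * Real.sinh (π * ν))) *
        Real.cos (-ν * Real.log (x / 2) + Complex.arg (Complex.Gamma (ν * Complex.I)))|
        ≤ C * x ^ 2 :=
  ⟨(1 + 2 / |ν|) / (4 * |ν|), by positivity,
    fun _ hx _ ↦ macdonald_asymptotic_at_zero_general hν.ne' hx⟩
end

section
/- For every real ν > 0 there exists a constant C > 0 such that for all x with 0 < x ≤ 1 one has | x · K_{iν}'(x) − ν · √(π/(ν · sinh(πν))) · sin( −ν · log(x/2) + arg Γ(iν) ) | ≤ C · x², where K_{iν}' denotes the derivative of K_{iν} with respect to x. -/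
open Real

/-!
Differentiating under the integral sign and substituting `u = (x / 2) * exp t` gives
`x * K_{iν}'(x) = -∫₀^∞ exp (-u - x² / (4 u)) * cos (ν * log u - ν * log (x / 2)) du`.
Dropping `x² / (4 u)` from the exponent leaves the real part of a multiple of `Γ (1 + iν)`, which is
the main term. A bound on the resulting error by absolute values loses a factor `log (1 / x)`;
it is removed by integrating by parts against `sin (ν * log u + c)`, whose derivative is
`(ν / u) * cos (ν * log u + c)`.
-/

open MeasureTheory Filter Topology Set

section ChangeOfVariables

variable {E : Type*} [NormedAddCommGroup E] [NormedSpace ℝ E]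

lemma integral_exp_smul_comp_exp (g : ℝ → E) :
    ∫ t, exp t • g (exp t) = ∫ u in Ioi 0, g u := by
  rw [← Real.range_exp, ← image_univ,
    integral_image_eq_integral_abs_deriv_smul MeasurableSet.univ
      (fun t _ ↦ (Real.hasDerivAt_exp t).hasDerivWithinAt) exp_injective.injOn]
  simp only [abs_exp, setIntegral_univ]

lemma integrable_exp_smul_comp_exp_iff {g : ℝ → E} :
    Integrable (fun t ↦ exp t • g (exp t)) ↔ IntegrableOn g (Ioi 0) := by
  rw [← Real.range_exp, ← image_univ,
    integrableOn_image_iff_integrableOn_abs_deriv_smul MeasurableSet.univ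
      (fun t _ ↦ (Real.hasDerivAt_exp t).hasDerivWithinAt) exp_injective.injOn]
  simp only [abs_exp, integrableOn_univ]

lemma integral_eq_integral_Ioi_add_comp_neg {f : ℝ → E} (hf : Integrable f) :
    ∫ t, f t = ∫ t in Ioi 0, (f t + f (-t)) := by
  rw [integral_add hf.integrableOn hf.comp_neg.integrableOn, integral_comp_neg_Ioi, neg_zero,
    add_comm, intervalIntegral.integral_Iic_add_Ioi hf.integrableOn hf.integrableOn]

end ChangeOfVariables

section OscillatoryIntegral

lemma integrable_mul_cos {α : Type*} [MeasurableSpace α] {μ : Measure α} {f θ : α → ℝ}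
    (hf : Integrable f μ) (hθ : Measurable θ) : Integrable (fun x ↦ f x * cos (θ x)) μ :=
  hf.mul_bdd (measurable_cos.comp hθ).aestronglyMeasurable (ae_of_all _ fun _ ↦ abs_cos_le_one _)

lemma integrable_mul_sin {α : Type*} [MeasurableSpace α] {μ : Measure α} {f θ : α → ℝ}
    (hf : Integrable f μ) (hθ : Measurable θ) : Integrable (fun x ↦ f x * sin (θ x)) μ :=
  hf.mul_bdd (measurable_sin.comp hθ).aestronglyMeasurable (ae_of_all _ fun _ ↦ abs_sin_le_one _)

lemma tendsto_mul_sin_zero {α : Type*} {l : Filter α} {f : α → ℝ} (hf : Tendsto f l (𝓝 0))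
    (θ : α → ℝ) : Tendsto (fun x ↦ f x * sin (θ x)) l (𝓝 0) :=
  hf.zero_mul_isBoundedUnder_le (isBoundedUnder_of ⟨1, fun x ↦ abs_sin_le_one (θ x)⟩)

theorem abs_integral_mul_cos_log_le {f φ' : ℝ → ℝ} {ν : ℝ} (hν : ν ≠ 0) (c : ℝ)
    (hf : IntegrableOn f (Ioi 0))
    (hderiv : ∀ u ∈ Ioi 0, HasDerivAt (fun u ↦ u * f u) (φ' u) u)
    (hφ' : IntegrableOn φ' (Ioi 0))
    (hzero : Tendsto (fun u ↦ u * f u) (𝓝[>] 0) (𝓝 0))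
    (htop : Tendsto (fun u ↦ u * f u) atTop (𝓝 0)) :
    |∫ u in Ioi 0, f u * cos (ν * log u + c)| ≤ (∫ u in Ioi 0, |φ' u|) / |ν| := by
  have hsin : ∀ u ∈ Ioi (0 : ℝ), HasDerivAt (fun u ↦ sin (ν * log u + c))
      (cos (ν * log u + c) * (ν * u⁻¹)) u := fun u hu ↦
    (((hasDerivAt_log (ne_of_gt hu)).const_mul ν).add_const c).sin
  have hfactor : EqOn (fun u ↦ ν * (f u * cos (ν * log u + c)))
      (fun u ↦ u * f u * (cos (ν * log u + c) * (ν * u⁻¹))) (Ioi 0) := fun u hu ↦ by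
    have : u ≠ 0 := ne_of_gt hu
    field_simp
  have hphase : Measurable fun u ↦ ν * log u + c := by fun_prop
  have hparts := integral_Ioi_mul_deriv_eq_deriv_mul hderiv hsin
    (IntegrableOn.congr_fun ((integrable_mul_cos hf hphase).const_mul ν) hfactor measurableSet_Ioi)
    (integrable_mul_sin hφ' hphase) (tendsto_mul_sin_zero hzero _) (tendsto_mul_sin_zero htop _)
  rw [← setIntegral_congr_fun measurableSet_Ioi hfactor, integral_const_mul] at hparts
  rw [le_div_iff₀' (abs_pos.2 hν), ← abs_mul, hparts, sub_zero, zero_sub, abs_neg]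
  refine abs_integral_le_integral_abs.trans
    (integral_mono (integrable_mul_sin hφ' hphase).abs hφ'.abs fun u ↦ ?_)
  simp only [abs_mul]
  exact mul_le_of_le_one_right (abs_nonneg _) (abs_sin_le_one _)

end OscillatoryIntegral

/-- The function `u ↦ u * (1 - exp (-a / u))`, which for `a ≥ 0` increases from `0` at `0` to `a`
at infinity. It measures the effect of the factor `exp (-a / u)` in the integrand
`exp (-u - a / u)`. -/
noncomputable def saturation (a u : ℝ) : ℝ := u * (1 - exp (-(a / u)))

/-- The derivative of `saturation a` away from `0`. -/
noncomputable def saturationDeriv (a u : ℝ) : ℝ := 1 - (1 + a / u) * exp (-(a / u))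

section Saturation

variable {a u : ℝ}

lemma saturation_zero_right (a : ℝ) : saturation a 0 = 0 := zero_mul _

lemma saturation_nonneg (ha : 0 ≤ a) (hu : 0 ≤ u) : 0 ≤ saturation a u :=
  mul_nonneg hu (sub_nonneg.2 (exp_le_one_iff.2 (neg_nonpos.2 (div_nonneg ha hu))))

lemma saturation_le_self (hu : 0 ≤ u) : saturation a u ≤ u :=
  mul_le_of_le_one_right hu (sub_le_self _ (exp_pos _).le)

lemma saturation_le (hu : 0 < u) : saturation a u ≤ a := by
  have h : 1 - exp (-(a / u)) ≤ a / u := by linarith [one_sub_le_exp_neg (a / u)]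
  calc saturation a u ≤ u * (a / u) := mul_le_mul_of_nonneg_left h hu.le
    _ = a := mul_div_cancel₀ a hu.ne'

lemma saturationDeriv_nonneg (a u : ℝ) : 0 ≤ saturationDeriv a u := by
  rw [saturationDeriv, sub_nonneg, exp_neg, ← div_eq_mul_inv, div_le_one (exp_pos _), add_comm]
  exact add_one_le_exp _

lemma hasDerivAt_saturation (a : ℝ) (hu : u ≠ 0) :
    HasDerivAt (saturation a) (saturationDeriv a u) u := by
  have hquot : HasDerivAt (fun u ↦ -(a / u)) (a / u ^ 2) u := by
    simpa [div_eq_mul_inv] using (hasDerivAt_inv hu).const_mul (-a)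
  refine ((hasDerivAt_id u).mul (hquot.exp.const_sub 1)).congr_deriv ?_
  simp only [saturationDeriv, id]
  field_simp
  ring

lemma continuousWithinAt_saturation_zero (ha : 0 ≤ a) :
    ContinuousWithinAt (saturation a) (Ici 0) 0 := by
  rw [ContinuousWithinAt, saturation_zero_right]
  exact squeeze_zero' (eventually_mem_nhdsWithin.mono fun u hu ↦ saturation_nonneg ha hu)
    (eventually_mem_nhdsWithin.mono fun u hu ↦ saturation_le_self hu)
    (tendsto_id.mono_left nhdsWithin_le_nhds)

lemma tendsto_saturation_atTop (a : ℝ) : Tendsto (saturation a) atTop (𝓝 a) := by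
  have hderiv : HasDerivAt (fun s : ℝ ↦ -exp (-(a * s))) a 0 := by
    simpa using ((hasDerivAt_id (0 : ℝ)).const_mul a).fun_neg.exp.fun_neg
  refine (hderiv.tendsto_slope_zero_right.comp tendsto_inv_atTop_nhdsGT_zero).congr fun u ↦ ?_
  simp [saturation, div_eq_mul_inv, neg_add_eq_sub]

lemma integrableOn_saturationDeriv (ha : 0 ≤ a) : IntegrableOn (saturationDeriv a) (Ioi 0) :=
  integrableOn_Ioi_deriv_of_nonneg (continuousWithinAt_saturation_zero ha)
    (fun _ hu ↦ hasDerivAt_saturation a (ne_of_gt hu)) (fun u _ ↦ saturationDeriv_nonneg a u)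
    (tendsto_saturation_atTop a)

lemma integral_saturationDeriv (ha : 0 ≤ a) : ∫ u in Ioi 0, saturationDeriv a u = a := by
  rw [integral_Ioi_of_hasDerivAt_of_nonneg (continuousWithinAt_saturation_zero ha)
    (fun _ hu ↦ hasDerivAt_saturation a (ne_of_gt hu)) (fun u _ ↦ saturationDeriv_nonneg a u)
    (tendsto_saturation_atTop a), saturation_zero_right, sub_zero]

lemma mul_exp_neg_sub_div_sub_exp_neg (a u : ℝ) :
    u * (exp (-u - a / u) - exp (-u)) = -(exp (-u) * saturation a u) := by
  rw [sub_eq_add_neg (-u), exp_add, saturation]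
  ring

lemma hasDerivAt_neg_exp_neg_mul_saturation (a : ℝ) (hu : u ≠ 0) :
    HasDerivAt (fun u ↦ -(exp (-u) * saturation a u))
      (exp (-u) * (saturation a u - saturationDeriv a u)) u := by
  refine ((hasDerivAt_neg u).exp.mul (hasDerivAt_saturation a hu)).neg.congr_deriv ?_
  ring

lemma abs_exp_neg_mul_saturation_sub_le (ha : 0 ≤ a) (hu : 0 < u) :
    |exp (-u) * (saturation a u - saturationDeriv a u)| ≤ a * exp (-u) + saturationDeriv a u := by
  have hexp : exp (-u) ≤ 1 := exp_le_one_iff.2 (neg_nonpos.2 hu.le)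
  calc |exp (-u) * (saturation a u - saturationDeriv a u)|
      ≤ exp (-u) * (saturation a u + saturationDeriv a u) := by
        rw [abs_mul, abs_exp]
        gcongr
        simpa only [abs_of_nonneg (saturation_nonneg ha hu.le),
          abs_of_nonneg (saturationDeriv_nonneg a u)] using
          abs_sub (saturation a u) (saturationDeriv a u)
    _ = saturation a u * exp (-u) + exp (-u) * saturationDeriv a u := by ring
    _ ≤ a * exp (-u) + saturationDeriv a u :=
        add_le_add (mul_le_mul_of_nonneg_right (saturation_le hu) (exp_pos _).le)
          (mul_le_of_le_one_left (saturationDeriv_nonneg a u) hexp)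

end Saturation

section DampedExponential

variable {a : ℝ}

lemma integrableOn_exp_neg_sub_div (ha : 0 ≤ a) :
    IntegrableOn (fun u ↦ exp (-u - a / u)) (Ioi 0) := by
  refine (integrableOn_exp_neg_Ioi 0).mono' (by fun_prop : Measurable _).aestronglyMeasurable
    ((ae_restrict_iff' measurableSet_Ioi).2 (ae_of_all _ fun u (hu : 0 < u) ↦ ?_))
  rw [norm_eq_abs, abs_exp]
  exact exp_le_exp.2 (sub_le_self _ (div_nonneg ha hu.le))

lemma integrableOn_exp_neg_mul_saturation_sub (ha : 0 ≤ a) :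
    IntegrableOn (fun u ↦ exp (-u) * (saturation a u - saturationDeriv a u)) (Ioi 0) := by
  refine (((integrableOn_exp_neg_Ioi 0).const_mul a).add (integrableOn_saturationDeriv ha)).mono'
    ?_ ((ae_restrict_iff' measurableSet_Ioi).2
      (ae_of_all _ fun u hu ↦ abs_exp_neg_mul_saturation_sub_le ha hu))
  unfold saturation saturationDeriv
  exact (by fun_prop : Measurable _).aestronglyMeasurable

lemma integral_abs_exp_neg_mul_saturation_sub_le (ha : 0 ≤ a) :
    ∫ u in Ioi 0, |exp (-u) * (saturation a u - saturationDeriv a u)| ≤ 2 * a := by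
  have hexp : IntegrableOn (fun u ↦ a * exp (-u)) (Ioi 0) :=
    (integrableOn_exp_neg_Ioi 0).const_mul a
  calc ∫ u in Ioi 0, |exp (-u) * (saturation a u - saturationDeriv a u)|
      ≤ ∫ u in Ioi 0, (a * exp (-u) + saturationDeriv a u) :=
        setIntegral_mono_on (integrableOn_exp_neg_mul_saturation_sub ha).abs
          (hexp.add (integrableOn_saturationDeriv ha)) measurableSet_Ioi
          fun u hu ↦ abs_exp_neg_mul_saturation_sub_le ha hu
    _ = 2 * a := by
        rw [integral_add hexp (integrableOn_saturationDeriv ha), integral_const_mul,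
          integral_exp_neg_Ioi_zero, integral_saturationDeriv ha]
        ring

theorem abs_integral_exp_neg_sub_div_mul_cos_log_sub_le {ν : ℝ} (hν : ν ≠ 0) (c : ℝ)
    (ha : 0 ≤ a) :
    |(∫ u in Ioi 0, exp (-u - a / u) * cos (ν * log u + c)) -
      ∫ u in Ioi 0, exp (-u) * cos (ν * log u + c)| ≤ 2 * a / |ν| := by
  have hdamped := integrableOn_exp_neg_sub_div ha
  have hexp := integrableOn_exp_neg_Ioi 0
  have hzero : Tendsto (fun u ↦ -(exp (-u) * saturation a u)) (𝓝[>] 0) (𝓝 0) := by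
    have hsat := (continuousWithinAt_saturation_zero ha).mono Ioi_subset_Ici_self
    simpa [saturation_zero_right] using
      (continuous_neg.rexp.continuousWithinAt.fun_mul hsat).fun_neg.tendsto
  have htop : Tendsto (fun u ↦ -(exp (-u) * saturation a u)) atTop (𝓝 0) := by
    simpa using (tendsto_exp_neg_atTop_nhds_zero.mul (tendsto_saturation_atTop a)).neg
  rw [← integral_sub (integrable_mul_cos hdamped (by fun_prop))
    (integrable_mul_cos hexp (by fun_prop))]
  simp only [← sub_mul]
  refine (abs_integral_mul_cos_log_le hν c (hdamped.sub hexp) (fun u hu ↦ ?_)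
    (integrableOn_exp_neg_mul_saturation_sub ha) ?_ ?_).trans
    (div_le_div_of_nonneg_right (integral_abs_exp_neg_mul_saturation_sub_le ha) (abs_nonneg ν))
  all_goals simp only [Pi.sub_apply, mul_exp_neg_sub_div_sub_exp_neg]
  exacts [hasDerivAt_neg_exp_neg_mul_saturation a (ne_of_gt hu), hzero, htop]

end DampedExponential

section Gamma

lemma integral_exp_neg_mul_rpow_mul_cos_log {s : ℂ} (hs : 0 < s.re) (c : ℝ) :
    ∫ u in Ioi 0, exp (-u) * u ^ (s.re - 1) * cos (s.im * log u + c) =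
      (Complex.exp (c * Complex.I) * Complex.Gamma s).re := by
  rw [Complex.Gamma_eq_integral hs, Complex.GammaIntegral, ← integral_const_mul,
    ← RCLike.re_eq_complex_re,
    ← integral_re ((Complex.GammaIntegral_convergent hs).const_mul (Complex.exp (c * Complex.I)))]
  refine setIntegral_congr_fun measurableSet_Ioi fun u (hu : 0 < u) ↦ ?_
  have hpow : (u : ℂ) ^ (s - 1) =
      (u ^ (s.re - 1) : ℝ) * Complex.exp ((s.im * log u : ℝ) * Complex.I) := by
    rw [Complex.cpow_def_of_ne_zero (by exact_mod_cast hu.ne'), ← Complex.ofReal_log hu.le,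
      rpow_def_of_pos hu, Complex.ofReal_exp, ← Complex.exp_add]
    congr 1
    apply Complex.ext <;> simp [mul_comm]
  have hphase : Complex.exp (c * Complex.I) * ((exp (-u) : ℝ) * (u : ℂ) ^ (s - 1)) =
      (exp (-u) * u ^ (s.re - 1) : ℝ) * Complex.exp ((s.im * log u + c : ℝ) * Complex.I) := by
    rw [hpow, Complex.ofReal_add, add_mul, Complex.exp_add]
    push_cast
    ring
  rw [RCLike.re_eq_complex_re, hphase, Complex.re_ofReal_mul, Complex.exp_ofReal_mul_I_re]

lemma integral_exp_neg_mul_cos_log {ν : ℝ} (hν : ν ≠ 0) (c : ℝ) :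
    ∫ u in Ioi 0, exp (-u) * cos (ν * log u + c) =
      -(ν * ‖Complex.Gamma (ν * Complex.I)‖ *
        sin (c + Complex.arg (Complex.Gamma (ν * Complex.I)))) := by
  have hint := integral_exp_neg_mul_rpow_mul_cos_log (s := ν * Complex.I + 1) (by simp) c
  rw [Complex.Gamma_add_one _ (by simpa using hν)] at hint
  set G := Complex.Gamma (ν * Complex.I)
  have hpolar : Complex.exp (c * Complex.I) * (ν * Complex.I * G) =
      (ν * ‖G‖ : ℝ) * (Complex.I * Complex.exp ((c + G.arg : ℝ) * Complex.I)) := by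
    conv_lhs => rw [← Complex.norm_mul_exp_arg_mul_I G]
    rw [Complex.ofReal_add, add_mul, Complex.exp_add]
    push_cast
    ring
  rw [hpolar, Complex.re_ofReal_mul, Complex.I_mul_re, Complex.exp_ofReal_mul_I_im] at hint
  simpa using hint

lemma norm_Gamma_ofReal_mul_I {ν : ℝ} (hν : ν ≠ 0) :
    ‖Complex.Gamma (ν * Complex.I)‖ = √(π / (ν * sinh (π * ν))) := by
  set G := Complex.Gamma (ν * Complex.I) with hG
  have hsinh : sinh (π * ν) ≠ 0 := by simp [hν, pi_ne_zero]
  have hshift : Complex.Gamma (1 - ν * Complex.I) = -(ν * Complex.I) * (starRingEnd ℂ) G := by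
    rw [hG, ← Complex.Gamma_conj, sub_eq_neg_add, Complex.Gamma_add_one _ (by simp [hν])]
    simp
  have hsin : Complex.sin (π * (ν * Complex.I)) = (sinh (π * ν) : ℝ) * Complex.I := by
    rw [← mul_assoc, Complex.sin_mul_I]
    push_cast
    rfl
  have hreflect := Complex.Gamma_mul_Gamma_one_sub (ν * Complex.I)
  rw [hshift, hsin, ← hG,
    eq_div_iff (mul_ne_zero (Complex.ofReal_ne_zero.2 hsinh) Complex.I_ne_zero)] at hreflect
  have hsq : ‖G‖ ^ 2 * (ν * sinh (π * ν)) = π := by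
    apply Complex.ofReal_injective
    rw [Complex.ofReal_mul, Complex.ofReal_pow, ← Complex.mul_conj', Complex.ofReal_mul]
    linear_combination hreflect +
      ν * G * (starRingEnd ℂ) G * (sinh (π * ν) : ℝ) * Complex.I_sq
  rw [← eq_div_of_mul_eq (mul_ne_zero hν hsinh) hsq, sqrt_sq (norm_nonneg G)]

end Gamma

section Macdonald

variable {x : ℝ}

lemma neg_exp_add_log_half_sub_div (hx : 0 < x) (t : ℝ) :
    -exp (t + log (x / 2)) - x ^ 2 / 4 / exp (t + log (x / 2)) = -x * cosh t := by
  rw [exp_add, exp_log (by positivity), cosh_eq, exp_neg]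
  field_simp
  ring

lemma integrable_exp_mul_exp_neg_mul_cosh (hx : 0 < x) :
    Integrable fun t ↦ exp t * exp (-x * cosh t) := by
  have h := ((integrable_exp_smul_comp_exp_iff.2 (integrableOn_exp_neg_sub_div
    (by positivity : 0 ≤ x ^ 2 / 4))).comp_add_right (log (x / 2))).const_mul (2 / x)
  refine h.congr (ae_of_all _ fun t ↦ ?_)
  simp only [smul_eq_mul, neg_exp_add_log_half_sub_div hx]
  rw [exp_add, exp_log (by positivity)]
  field_simp

lemma integrable_cosh_mul_exp_neg_mul_cosh (hx : 0 < x) :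
    Integrable fun t ↦ cosh t * exp (-x * cosh t) := by
  have h := integrable_exp_mul_exp_neg_mul_cosh hx
  refine ((h.add h.comp_neg).div_const 2).congr (ae_of_all _ fun t ↦ ?_)
  simp only [Pi.add_apply, cosh_neg, cosh_eq t]
  ring

lemma hasDerivAt_Kim (ν : ℝ) (hx : 0 < x) :
    HasDerivAt (Kim ν) (-∫ t in Ioi 0, cosh t * exp (-x * cosh t) * cos (ν * t)) x := by
  rw [← integral_neg]
  refine (hasDerivAt_integral_of_dominated_loc_of_deriv_le (Ioi_mem_nhds (half_lt_self hx))
    (F := fun y t ↦ exp (-y * cosh t) * cos (ν * t))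
    (F' := fun y t ↦ -(cosh t * exp (-y * cosh t) * cos (ν * t)))
    (bound := fun t ↦ cosh t * exp (-(x / 2) * cosh t))
    (.of_forall fun y ↦ (by fun_prop : Measurable _).aestronglyMeasurable) ?_
    (by fun_prop : Measurable _).aestronglyMeasurable
    (ae_of_all _ fun t y (hy : x / 2 < y) ↦ ?_)
    (integrable_cosh_mul_exp_neg_mul_cosh (half_pos hx)).integrableOn
    (ae_of_all _ fun t y _ ↦ ?_)).2
  · refine (integrable_cosh_mul_exp_neg_mul_cosh hx).integrableOn.mono'
      (by fun_prop : Measurable _).aestronglyMeasurable (ae_of_all _ fun t ↦ ?_)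
    rw [norm_mul, norm_eq_abs, abs_exp]
    exact (mul_le_of_le_one_right (exp_pos _).le (abs_cos_le_one _)).trans
      (le_mul_of_one_le_left (exp_pos _).le (one_le_cosh t))
  · rw [norm_neg, norm_mul, norm_eq_abs, abs_of_pos (by positivity)]
    refine (mul_le_of_le_one_right (by positivity) (abs_cos_le_one _)).trans ?_
    gcongr
  · refine (((hasDerivAt_neg y).mul_const (cosh t)).exp.mul_const (cos (ν * t))).congr_deriv ?_
    ring

lemma integral_exp_neg_sub_div_mul_cos_log (ν : ℝ) (hx : 0 < x) :
    ∫ u in Ioi 0, exp (-u - x ^ 2 / 4 / u) * cos (ν * log u + -ν * log (x / 2)) =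
      x * ∫ t in Ioi 0, cosh t * exp (-x * cosh t) * cos (ν * t) := by
  set L := log (x / 2) with hL
  set g : ℝ → ℝ := fun u ↦ exp (-u - x ^ 2 / 4 / u) * cos (ν * log u + -ν * L) with hg
  set G : ℝ → ℝ := fun t ↦ x / 2 * (exp t * exp (-x * cosh t) * cos (ν * t)) with hG
  have hshift (t : ℝ) : exp (t + L) • g (exp (t + L)) = G t := by
    simp only [hg, hG, hL, neg_exp_add_log_half_sub_div hx, log_exp, smul_eq_mul]
    rw [exp_add, exp_log (half_pos hx)]
    ring_nf
  have hfold (t : ℝ) : G t + G (-t) = x * (cosh t * exp (-x * cosh t) * cos (ν * t)) := by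
    simp only [hG, cosh_neg, mul_neg, cos_neg, cosh_eq t]
    ring
  have hG_int : Integrable G :=
    (integrable_mul_cos (integrable_exp_mul_exp_neg_mul_cosh hx) (by fun_prop)).const_mul (x / 2)
  calc ∫ u in Ioi 0, g u = ∫ t, exp t • g (exp t) := (integral_exp_smul_comp_exp g).symm
    _ = ∫ t, exp (t + L) • g (exp (t + L)) := (integral_add_right_eq_self _ L).symm
    _ = ∫ t in Ioi 0, (G t + G (-t)) := by
      simp only [hshift, integral_eq_integral_Ioi_add_comp_neg hG_int]
    _ = x * ∫ t in Ioi 0, cosh t * exp (-x * cosh t) * cos (ν * t) := by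
      simp only [hfold, integral_const_mul]

lemma mul_deriv_Kim (ν : ℝ) (hx : 0 < x) :
    x * deriv (Kim ν) x =
      -∫ u in Ioi 0, exp (-u - x ^ 2 / 4 / u) * cos (ν * log u + -ν * log (x / 2)) := by
  rw [(hasDerivAt_Kim ν hx).deriv, integral_exp_neg_sub_div_mul_cos_log ν hx, mul_neg]

end Macdonald

theorem macdonald_deriv_asymptotic_at_zero_general {ν x : ℝ} (hν : ν ≠ 0) (hx : 0 < x) :
    |x * deriv (Kim ν) x - ν * Real.sqrt (π / (ν * Real.sinh (π * ν))) *
      Real.sin (-ν * Real.log (x / 2) + Complex.arg (Complex.Gamma (ν * Complex.I)))|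
      ≤ 1 / (2 * |ν|) * x ^ 2 := by
  have hbound := abs_integral_exp_neg_sub_div_mul_cos_log_sub_le hν (-ν * log (x / 2))
    (by positivity : 0 ≤ x ^ 2 / 4)
  rw [integral_exp_neg_mul_cos_log hν, norm_Gamma_ofReal_mul_I hν, ← neg_neg (integral _ _),
    ← mul_deriv_Kim ν hx, neg_sub_neg, abs_sub_comm] at hbound
  exact hbound.trans_eq (by ring)

theorem macdonald_deriv_asymptotic_at_zero (ν : ℝ) (hν : 0 < ν) :
    ∃ C > 0, ∀ x : ℝ, 0 < x → x ≤ 1 →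
      |x * deriv (Kim ν) x - ν * Real.sqrt (π / (ν * Real.sinh (π * ν))) *
        Real.sin (-ν * Real.log (x / 2) + Complex.arg (Complex.Gamma (ν * Complex.I)))|
        ≤ C * x ^ 2 :=
  ⟨1 / (2 * |ν|), by positivity, fun _ hx _ ↦
    macdonald_deriv_asymptotic_at_zero_general hν.ne' hx⟩
end

section
/- For all real ν, ν' and every ξ > 0, the function x ↦ K_{iν}(x) · K_{iν'}(x) / x is integrable on the interval [ξ, ∞), and the weighted Lagrange (Green's) identity holds: (ν² − ν'²) · ∫_ξ^∞ K_{iν}(x) K_{iν'}(x) / x dx = − ξ · ( K_{iν}(ξ) · K_{iν'}'(ξ) − K_{iν'}(ξ) · K_{iν}'(ξ) ), where ' denotes differentiation with respect to the argument. -/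
open Real MeasureTheory

/-!
The Macdonald function is a Laplace integral with phase `cosh t ≥ 1`, so it may be differentiated
under the integral sign and decays like `e^{-x}` together with its derivatives. The modified Bessel
operator in `x` turns the integrand into `d/dt [e^{-x cosh t} (ν sin νt - x sinh t cos νt)]`, whose
integral over `(0, ∞)` vanishes, so `K_{iν}` solves the modified Bessel equation; its self-adjoint
form is `(x f')' = (x - ν² / x) f`. For solutions `f` and `g` of orders `iν` and `iμ`, Lagrange's
identity then reads `(x (f g' - g f'))' = (ν² - μ²) f g / x`, and integrating it leaves only the
boundary term at `ξ`.
-/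

open Filter Asymptotics Set Topology

section SturmLiouville

theorem hasDerivAt_mul_wronskian {𝕜 A : Type*} [NontriviallyNormedField 𝕜] [NormedCommRing A]
    [NormedAlgebra 𝕜 A] {f f' g g' p : 𝕜 → A} {q r : A} {x : 𝕜}
    (hf : HasDerivAt f (f' x) x) (hpf : HasDerivAt (fun y => p y * f' y) (q * f x) x)
    (hg : HasDerivAt g (g' x) x) (hpg : HasDerivAt (fun y => p y * g' y) (r * g x) x) :
    HasDerivAt (fun y => p y * (f y * g' y - g y * f' y)) ((r - q) * (f x * g x)) x := by
  refine (((hf.fun_mul hpg).fun_sub (hg.fun_mul hpf)).congr_deriv ?_).congr_of_eventuallyEq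
    (Eventually.of_forall fun y => ?_) <;> ring

theorem integral_Ioi_green_identity {A : Type*} [NormedCommRing A] [NormedAlgebra ℝ A]
    [CompleteSpace A] {f f' g g' p q r : ℝ → A} {a : ℝ}
    (hf : ∀ x ∈ Ici a, HasDerivAt f (f' x) x)
    (hpf : ∀ x ∈ Ici a, HasDerivAt (fun y => p y * f' y) (q x * f x) x)
    (hg : ∀ x ∈ Ici a, HasDerivAt g (g' x) x)
    (hpg : ∀ x ∈ Ici a, HasDerivAt (fun y => p y * g' y) (r x * g x) x)
    (hint : IntegrableOn (fun x => (r x - q x) * (f x * g x)) (Ioi a))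
    (hlim : Tendsto (fun x => p x * (f x * g' x - g x * f' x)) atTop (𝓝 0)) :
    ∫ x in Ioi a, (r x - q x) * (f x * g x) = -(p a * (f a * g' a - g a * f' a)) := by
  rw [← zero_sub]
  exact integral_Ioi_of_hasDerivAt_of_tendsto'
    (fun x hx => hasDerivAt_mul_wronskian (hf x hx) (hpf x hx) (hg x hx) (hpg x hx)) hint hlim

end SturmLiouville

section LaplaceMoment

variable {α E : Type*} [MeasurableSpace α] [NormedAddCommGroup E] [NormedSpace ℝ E]
  {μ : Measure α} {φ : α → ℝ} {w : α → E}

/-- The `n`-th moment `∫ φⁿ e^{-xφ} w dμ` of a Laplace integral with phase `φ` and amplitude `w`;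
up to the sign `(-1)ⁿ` it is the `n`-th derivative in `x` of the Laplace integral itself. -/
noncomputable def laplaceMoment (μ : Measure α) (φ : α → ℝ) (w : α → E) (n : ℕ) (x : ℝ) : E :=
  ∫ t, (φ t ^ n * exp (-x * φ t)) • w t ∂μ

theorem pow_mul_exp_neg_mul_le (n : ℕ) {x c : ℝ} (hx : 0 < x) (hc : 0 ≤ c) :
    c ^ n * exp (-x * c) ≤ n.factorial / (x / 2) ^ n * exp (-(x / 2) * c) := by
  have hpow : c ^ n ≤ n.factorial / (x / 2) ^ n * exp (x / 2 * c) := by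
    have h := pow_div_factorial_le_exp (x := x / 2 * c) (by positivity) n
    rw [div_le_iff₀ (by positivity), mul_pow] at h
    rw [div_mul_eq_mul_div, le_div_iff₀ (by positivity)]
    linarith
  calc c ^ n * exp (-x * c)
      ≤ n.factorial / (x / 2) ^ n * exp (x / 2 * c) * exp (-x * c) := by gcongr
    _ = n.factorial / (x / 2) ^ n * exp (-(x / 2) * c) := by
      rw [mul_assoc, ← exp_add]
      ring_nf

theorem integrable_pow_mul_exp_smul (hφ : AEStronglyMeasurable φ μ) (hφ0 : ∀ᵐ t ∂μ, 0 ≤ φ t)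
    (hw : ∀ x > 0, Integrable (fun t => exp (-x * φ t) • w t) μ) (n : ℕ) {x : ℝ} (hx : 0 < x) :
    Integrable (fun t => (φ t ^ n * exp (-x * φ t)) • w t) μ := by
  refine ((hw (x / 2) (half_pos hx)).smul (n.factorial / (x / 2) ^ n : ℝ)).mono ?_ ?_
  · simp only [mul_smul]
    exact (hφ.pow n).smul (hw x hx).aestronglyMeasurable
  · filter_upwards [hφ0] with t ht
    rw [Pi.smul_apply, smul_smul, norm_smul, norm_smul, norm_of_nonneg (by positivity),
      norm_of_nonneg (by positivity)]
    exact mul_le_mul_of_nonneg_right (pow_mul_exp_neg_mul_le n hx ht) (norm_nonneg _)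

theorem hasDerivAt_laplaceMoment (hφ : AEStronglyMeasurable φ μ) (hφ0 : ∀ᵐ t ∂μ, 0 ≤ φ t)
    (hw : ∀ x > 0, Integrable (fun t => exp (-x * φ t) • w t) μ) (n : ℕ) {x : ℝ} (hx : 0 < x) :
    HasDerivAt (laplaceMoment μ φ w n) (-laplaceMoment μ φ w (n + 1) x) x := by
  have hint := integrable_pow_mul_exp_smul hφ hφ0 hw
  have hbound : ∀ᵐ t ∂μ, ∀ y ∈ Ioi (x / 2), ‖-((φ t ^ (n + 1) * exp (-y * φ t)) • w t)‖ ≤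
      ‖(φ t ^ (n + 1) * exp (-(x / 2) * φ t)) • w t‖ := by
    filter_upwards [hφ0] with t ht y hy
    rw [norm_neg, norm_smul, norm_smul, norm_of_nonneg (by positivity),
      norm_of_nonneg (by positivity)]
    have : x / 2 ≤ y := le_of_lt hy
    gcongr
  have hderiv : ∀ t, ∀ y ∈ Ioi (x / 2), HasDerivAt (fun z => (φ t ^ n * exp (-z * φ t)) • w t)
      (-((φ t ^ (n + 1) * exp (-y * φ t)) • w t)) y := by
    intro t y _
    have hexp : HasDerivAt (fun z : ℝ => exp (-z * φ t)) (exp (-y * φ t) * (-1 * φ t)) y :=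
      ((hasDerivAt_neg y).mul_const (φ t)).exp
    refine ((hexp.const_mul (φ t ^ n)).smul_const (w t)).congr_deriv ?_
    rw [← neg_smul]
    ring_nf
  have h := (hasDerivAt_integral_of_dominated_loc_of_deriv_le (Ioi_mem_nhds (half_lt_self hx))
    ((eventually_gt_nhds hx).mono fun y hy => (hint n hy).aestronglyMeasurable) (hint n hx)
    (hint (n + 1) hx).neg.aestronglyMeasurable hbound (hint (n + 1) (half_pos hx)).norm
    (Eventually.of_forall hderiv)).2
  rwa [integral_neg] at h

theorem laplaceMoment_isBigO_exp_neg_mul {a ξ : ℝ} {n : ℕ} (hφ : ∀ᵐ t ∂μ, a ≤ φ t)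
    (hint : Integrable (fun t => (φ t ^ n * exp (-ξ * φ t)) • w t) μ) :
    laplaceMoment μ φ w n =O[atTop] fun x => exp (-a * x) := by
  refine IsBigO.of_bound (∫ t, exp (a * ξ) * ‖(φ t ^ n * exp (-ξ * φ t)) • w t‖ ∂μ) ?_
  filter_upwards [eventually_ge_atTop ξ] with x hx
  rw [← integral_mul_const]
  refine norm_integral_le_of_norm_le ((hint.norm.const_mul _).mul_const _) ?_
  filter_upwards [hφ] with t ht
  have hexp : exp (-x * φ t) ≤ exp (a * ξ) * exp (-ξ * φ t) * exp (-a * x) := by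
    rw [← exp_add, ← exp_add, exp_le_exp]
    nlinarith [mul_nonneg (sub_nonneg.2 hx) (sub_nonneg.2 ht)]
  simp only [norm_smul, norm_mul, norm_of_nonneg (exp_nonneg _)]
  calc ‖φ t ^ n‖ * exp (-x * φ t) * ‖w t‖
      ≤ ‖φ t ^ n‖ * (exp (a * ξ) * exp (-ξ * φ t) * exp (-a * x)) * ‖w t‖ := by gcongr
    _ = exp (a * ξ) * (‖φ t ^ n‖ * exp (-ξ * φ t) * ‖w t‖) * exp (-a * x) := by ring

end LaplaceMoment

section Cosh

theorem abs_sinh_lt_cosh (t : ℝ) : |sinh t| < cosh t := by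
  rw [abs_sinh, ← cosh_abs]
  exact sinh_lt_cosh _

theorem self_lt_cosh (t : ℝ) : t < cosh t :=
  calc t ≤ |t| := le_abs_self t
    _ ≤ |sinh t| := by
      rw [abs_sinh]
      exact self_le_sinh_iff.2 (abs_nonneg t)
    _ < cosh t := abs_sinh_lt_cosh t

theorem tendsto_cosh_atTop : Tendsto cosh atTop atTop :=
  tendsto_atTop_mono (fun t => (self_lt_cosh t).le) tendsto_id

theorem integrableOn_exp_neg_mul_cosh {x : ℝ} (hx : 0 < x) :
    IntegrableOn (fun t => exp (-x * cosh t)) (Ioi 0) := by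
  refine (exp_neg_integrableOn_Ioi 0 hx).mono' (by fun_prop) (Eventually.of_forall fun t => ?_)
  rw [norm_of_nonneg (exp_nonneg _), exp_le_exp]
  nlinarith [self_lt_cosh t]

theorem tendsto_cosh_mul_exp_neg_mul_cosh {x : ℝ} (hx : 0 < x) :
    Tendsto (fun t => cosh t * exp (-x * cosh t)) atTop (𝓝 0) := by
  have h := ((tendsto_pow_mul_exp_neg_atTop_nhds_zero 1).comp
    (tendsto_cosh_atTop.const_mul_atTop hx)).const_mul x⁻¹
  rw [mul_zero] at h
  refine h.congr fun t => ?_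
  simp only [Function.comp_apply, pow_one, neg_mul]
  field_simp

end Cosh

section Macdonald

variable {x : ℝ}

/-- The moments `∫_0^∞ coshⁿ t e^{-x cosh t} cos(νt) dt`, that is `(-1)ⁿ` times the `n`-th
derivative of `K_{iν}`. -/
noncomputable def macdonaldMoment (ν : ℝ) : ℕ → ℝ → ℝ :=
  laplaceMoment (volume.restrict (Ioi 0)) cosh fun t => cos (ν * t)

theorem macdonaldMoment_zero (ν : ℝ) : macdonaldMoment ν 0 = Kim ν := by
  ext x
  simp only [macdonaldMoment, laplaceMoment, Kim, pow_zero, one_mul, smul_eq_mul]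

theorem integrableOn_exp_neg_mul_cosh_mul_cos (ν : ℝ) (hx : 0 < x) :
    IntegrableOn (fun t => exp (-x * cosh t) * cos (ν * t)) (Ioi 0) :=
  (integrableOn_exp_neg_mul_cosh hx).mul_bdd (by fun_prop)
    (Eventually.of_forall fun t => abs_cos_le_one (ν * t))

theorem integrableOn_cosh_pow_mul_exp_mul_cos (ν : ℝ) (n : ℕ) (hx : 0 < x) :
    IntegrableOn (fun t => cosh t ^ n * exp (-x * cosh t) * cos (ν * t)) (Ioi 0) :=
  integrable_pow_mul_exp_smul (by fun_prop) (Eventually.of_forall fun t => (cosh_pos t).le)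
    (fun _ => integrableOn_exp_neg_mul_cosh_mul_cos ν) n hx

theorem hasDerivAt_macdonaldMoment (ν : ℝ) (n : ℕ) (hx : 0 < x) :
    HasDerivAt (macdonaldMoment ν n) (-macdonaldMoment ν (n + 1) x) x :=
  hasDerivAt_laplaceMoment (by fun_prop) (Eventually.of_forall fun t => (cosh_pos t).le)
    (fun _ => integrableOn_exp_neg_mul_cosh_mul_cos ν) n hx

theorem macdonaldMoment_isBigO_exp_neg (ν : ℝ) (n : ℕ) :
    macdonaldMoment ν n =O[atTop] fun x => exp (-x) :=
  (laplaceMoment_isBigO_exp_neg_mul (Eventually.of_forall one_le_cosh)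
    (integrableOn_cosh_pow_mul_exp_mul_cos ν n one_pos)).congr_right fun x => by rw [neg_one_mul]

/-- An antiderivative in `t` of `(x² ∂ₓ² + x ∂ₓ + ν² - x²) (e^{-x cosh t} cos(νt))`, the modified
Bessel operator of order `iν` applied to the integrand of `K_{iν}`. -/
noncomputable def besselPrimitive (ν x t : ℝ) : ℝ :=
  exp (-x * cosh t) * (ν * sin (ν * t) - x * sinh t * cos (ν * t))

theorem hasDerivAt_besselPrimitive (ν x t : ℝ) :
    HasDerivAt (besselPrimitive ν x)
      (x ^ 2 * (cosh t ^ 2 * exp (-x * cosh t) * cos (ν * t))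
        + (ν ^ 2 - x ^ 2) * (cosh t ^ 0 * exp (-x * cosh t) * cos (ν * t))
        - x * (cosh t ^ 1 * exp (-x * cosh t) * cos (ν * t))) t := by
  have hlin : HasDerivAt (fun s => ν * s) (ν * 1) t := (hasDerivAt_id t).const_mul ν
  have hexp := ((hasDerivAt_cosh t).const_mul (-x)).exp
  have htrig := (hlin.sin.const_mul ν).fun_sub
    (((hasDerivAt_sinh t).const_mul x).fun_mul hlin.cos)
  refine (hexp.fun_mul htrig).congr_deriv ?_
  rw [cosh_sq]
  ring

theorem tendsto_besselPrimitive_atTop (ν : ℝ) (hx : 0 < x) :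
    Tendsto (besselPrimitive ν x) atTop (𝓝 0) := by
  have hlim := (tendsto_cosh_mul_exp_neg_mul_cosh hx).const_mul (|ν| + x)
  rw [mul_zero] at hlim
  refine squeeze_zero_norm (fun t => ?_) hlim
  have hsin : |ν * sin (ν * t)| ≤ |ν| * cosh t := by
    rw [abs_mul]
    gcongr
    exact (abs_sin_le_one _).trans (one_le_cosh t)
  have hcos : |x * sinh t * cos (ν * t)| ≤ x * cosh t := by
    rw [abs_mul, abs_mul, abs_of_pos hx, mul_assoc]
    gcongr
    exact (mul_le_of_le_one_right (abs_nonneg _) (abs_cos_le_one _)).trans (abs_sinh_lt_cosh t).le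
  rw [besselPrimitive, norm_mul, norm_of_nonneg (exp_nonneg _)]
  calc exp (-x * cosh t) * |ν * sin (ν * t) - x * sinh t * cos (ν * t)|
      ≤ exp (-x * cosh t) * (|ν| * cosh t + x * cosh t) := by
        gcongr
        exact (abs_sub _ _).trans (add_le_add hsin hcos)
    _ = (|ν| + x) * (cosh t * exp (-x * cosh t)) := by ring

theorem macdonaldMoment_bessel_equation (ν : ℝ) (hx : 0 < x) :
    x ^ 2 * macdonaldMoment ν 2 x + (ν ^ 2 - x ^ 2) * macdonaldMoment ν 0 x
      - x * macdonaldMoment ν 1 x = 0 := by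
  have h2 := (integrableOn_cosh_pow_mul_exp_mul_cos ν 2 hx).const_mul (x ^ 2)
  have h1 := (integrableOn_cosh_pow_mul_exp_mul_cos ν 1 hx).const_mul x
  have h0 := (integrableOn_cosh_pow_mul_exp_mul_cos ν 0 hx).const_mul (ν ^ 2 - x ^ 2)
  have hftc := integral_Ioi_of_hasDerivAt_of_tendsto' (a := 0)
    (fun t _ => hasDerivAt_besselPrimitive ν x t) ((h2.fun_add h0).sub h1)
    (tendsto_besselPrimitive_atTop ν hx)
  have hzero : besselPrimitive ν x 0 = 0 := by simp [besselPrimitive]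
  rw [integral_sub (h2.fun_add h0) h1, integral_add h2 h0, hzero, sub_zero] at hftc
  simp only [integral_const_mul] at hftc
  exact hftc

theorem hasDerivAt_kim (ν : ℝ) (hx : 0 < x) : HasDerivAt (Kim ν) (-macdonaldMoment ν 1 x) x :=
  macdonaldMoment_zero ν ▸ hasDerivAt_macdonaldMoment ν 0 hx

theorem deriv_kim (ν : ℝ) (hx : 0 < x) : deriv (Kim ν) x = -macdonaldMoment ν 1 x :=
  (hasDerivAt_kim ν hx).deriv

theorem hasDerivAt_mul_deriv_kim (ν : ℝ) (hx : 0 < x) :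
    HasDerivAt (fun y => y * deriv (Kim ν) y) ((x - ν ^ 2 / x) * Kim ν x) x := by
  have hderiv : (fun y => y * deriv (Kim ν) y) =ᶠ[𝓝 x] fun y => y * -macdonaldMoment ν 1 y :=
    (eventually_gt_nhds hx).mono fun y hy => by simp only [deriv_kim ν hy]
  refine (((hasDerivAt_id' x).fun_mul (hasDerivAt_macdonaldMoment ν 1 hx).fun_neg).congr_deriv
    ?_).congr_of_eventuallyEq hderiv
  have hode := macdonaldMoment_bessel_equation ν hx
  rw [← macdonaldMoment_zero]
  field_simp
  linear_combination hode

theorem kim_isBigO_exp_neg (ν : ℝ) : Kim ν =O[atTop] fun x => exp (-x) :=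
  macdonaldMoment_zero ν ▸ macdonaldMoment_isBigO_exp_neg ν 0

theorem deriv_kim_isBigO_exp_neg (ν : ℝ) : deriv (Kim ν) =O[atTop] fun x => exp (-x) :=
  (macdonaldMoment_isBigO_exp_neg ν 1).neg_left.congr'
    ((eventually_gt_atTop 0).mono fun _ hx => (deriv_kim ν hx).symm) EventuallyEq.rfl

theorem integrableOn_kim_mul_kim_div (ν ν' : ℝ) {ξ : ℝ} (hξ : 0 < ξ) :
    IntegrableOn (fun x => Kim ν x * Kim ν' x / x) (Ioi ξ) := by
  have hcont (μ : ℝ) : ContinuousOn (Kim μ) (Ici ξ) := fun x hx =>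
    (hasDerivAt_kim μ (hξ.trans_le hx)).continuousAt.continuousWithinAt
  refine integrable_of_isBigO_exp_neg two_pos
    (((hcont ν).mul (hcont ν')).div continuousOn_id fun x hx => (hξ.trans_le hx).ne') ?_
  have hinv : (fun x : ℝ => x⁻¹) =O[atTop] fun _ => (1 : ℝ) := tendsto_inv_atTop_zero.isBigO_one ℝ
  refine (((kim_isBigO_exp_neg ν).mul (kim_isBigO_exp_neg ν')).mul hinv).congr_right fun x => ?_
  rw [mul_one, ← exp_add]
  ring_nf

theorem tendsto_mul_wronskian_kim (ν ν' : ℝ) :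
    Tendsto (fun x => x * (Kim ν x * deriv (Kim ν') x - Kim ν' x * deriv (Kim ν) x))
      atTop (𝓝 0) := by
  have hprod (μ μ' : ℝ) : Tendsto (fun x => x * (Kim μ x * deriv (Kim μ') x)) atTop (𝓝 0) := by
    have hexp : Tendsto (fun x : ℝ => x * (exp (-x) * exp (-x))) atTop (𝓝 0) := by
      simpa [mul_assoc] using
        (tendsto_pow_mul_exp_neg_atTop_nhds_zero 1).mul tendsto_exp_neg_atTop_nhds_zero
    have hdecay := (kim_isBigO_exp_neg μ).mul (deriv_kim_isBigO_exp_neg μ')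
    exact ((isBigO_refl _ _).mul hdecay).trans_tendsto hexp
  simpa only [mul_sub, sub_zero] using (hprod ν ν').sub (hprod ν' ν)

end Macdonald

theorem macdonald_green_identity (ν ν' ξ : ℝ) (hξ : 0 < ξ) :
    IntegrableOn (fun x => Kim ν x * Kim ν' x / x) (Set.Ici ξ) ∧
    (ν ^ 2 - ν' ^ 2) * ∫ x in Set.Ici ξ, Kim ν x * Kim ν' x / x =
      -ξ * (Kim ν ξ * deriv (Kim ν') ξ - Kim ν' ξ * deriv (Kim ν) ξ) := by
  rw [integrableOn_Ici_iff_integrableOn_Ioi, integral_Ici_eq_integral_Ioi]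
  have hint := integrableOn_kim_mul_kim_div ν ν' hξ
  have hpos : ∀ x ∈ Ici ξ, 0 < x := fun _ hx => hξ.trans_le hx
  have hderiv (μ : ℝ) : ∀ x ∈ Ici ξ, HasDerivAt (Kim μ) (deriv (Kim μ) x) x := fun x hx =>
    (hasDerivAt_kim μ (hpos x hx)).differentiableAt.hasDerivAt
  have hbessel (μ : ℝ) : ∀ x ∈ Ici ξ,
      HasDerivAt (fun y => y * deriv (Kim μ) y) ((x - μ ^ 2 / x) * Kim μ x) x := fun x hx =>
    hasDerivAt_mul_deriv_kim μ (hpos x hx)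
  have hcoeff (x : ℝ) : (x - ν' ^ 2 / x - (x - ν ^ 2 / x)) * (Kim ν x * Kim ν' x) =
      (ν ^ 2 - ν' ^ 2) * (Kim ν x * Kim ν' x / x) := by ring
  have hgreen := integral_Ioi_green_identity (hderiv ν) (hbessel ν) (hderiv ν') (hbessel ν')
    (by simp only [hcoeff]; exact hint.const_mul _) (tendsto_mul_wronskian_kim ν ν')
  simp only [hcoeff, integral_const_mul] at hgreen
  exact ⟨hint, by rw [hgreen, neg_mul]⟩
end

section
/- Let f : ℝ → ℝ be a real analytic function with f(0) = 0. Then, in the distributional sense, sin(aη + f(η)) / (πη) converges to the Dirac delta distribution δ(η) as a → +∞; precisely, for every smooth compactly supported function φ : ℝ → ℝ, lim_{a → +∞} ∫_ℝ φ(η) · sin(a η + f(η)) / (π η) dη = φ(0). -/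
/-!
With `ψ = φ * exp (i f)`, the integrand is `Im (exp (i a η) * ψ η) / (π η)`, and `ψ 0 = φ 0`.
Dini's condition, the integrability of difference quotients near `0`, passes from `φ` and `f` to
`ψ`. Hence, for a multiple `G` of a Gaussian density with `G 0 = ψ 0`, the quotient
`(ψ η - G η) / η` is integrable, and by the Riemann–Lebesgue lemma replacing `ψ` by `G` does not
change the limit. For `G` itself, `∫ G η * sin (a η) / η dη` is half the integral over `[-a, a]` of
the characteristic function of `G`, which is again a Gaussian.
-/

open Real Filter MeasureTheory

open Asymptotics ProbabilityTheory

open scoped NNReal Topology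

lemma slope_sub {k E : Type*} [Field k] [AddCommGroup E] [Module k E] (g h : k → E) (a : k) :
    slope (g - h) a = slope g a - slope h a := by
  ext x
  simp only [slope, vsub_eq_sub, Pi.sub_apply]
  module

section Dini

variable {E F : Type*} [NormedAddCommGroup E] [NormedSpace ℝ E] [NormedAddCommGroup F]
  [NormedSpace ℝ F] {μ : Measure ℝ} {a : ℝ}

lemma aestronglyMeasurable_slope {g : ℝ → E} (hg : AEStronglyMeasurable g μ) :
    AEStronglyMeasurable (slope g a) μ :=
  (by fun_prop : Measurable fun x : ℝ ↦ (x - a)⁻¹).aestronglyMeasurable.smul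
    (hg.sub aestronglyMeasurable_const)

lemma integrableAtFilter_slope_of_differentiableAt [IsLocallyFiniteMeasure μ] {g : ℝ → E}
    (hg : AEStronglyMeasurable g μ) (hga : DifferentiableAt ℝ g a) :
    IntegrableAtFilter (slope g a) (𝓝 a) μ := by
  have bounded : slope g a =O[𝓝 a] fun _ ↦ (1 : ℝ) :=
    ((isBigO_refl (fun x ↦ (x - a)⁻¹) (𝓝 a)).smul hga.isBigO_sub).trans <|
      .of_bound 1 <| .of_forall fun x ↦ by
        simpa using inv_mul_le_one
  exact bounded.integrableAtFilter
    (aestronglyMeasurable_slope hg).stronglyMeasurableAtFilter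
    ((locallyIntegrable_const (1 : ℝ)) a)

lemma integrableAtFilter_slope_lipschitz_comp {u : E → F} {K : ℝ≥0} (hu : LipschitzWith K u)
    {g : ℝ → E} (hg : AEStronglyMeasurable g μ) (hga : IntegrableAtFilter (slope g a) (𝓝 a) μ) :
    IntegrableAtFilter (slope (u ∘ g) a) (𝓝 a) μ := by
  have slope_le (x : ℝ) : ‖slope (u ∘ g) a x‖ ≤ K * ‖slope g a x‖ := by
    simp only [slope, vsub_eq_sub, Function.comp_apply, norm_smul]
    rw [mul_left_comm]
    gcongr
    exact hu.norm_sub_le _ _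
  exact (IsBigO.of_bound K (.of_forall slope_le)).integrableAtFilter
    (aestronglyMeasurable_slope
      (hu.continuous.comp_aestronglyMeasurable hg)).stronglyMeasurableAtFilter hga

lemma integrableAtFilter_slope_smul {g : ℝ → ℝ} {u : ℝ → E} {C : ℝ}
    (hga : IntegrableAtFilter (slope g a) (𝓝 a) μ) (hu : AEStronglyMeasurable u μ)
    (hua : IntegrableAtFilter (slope u a) (𝓝 a) μ) (hC : ∀ x, ‖u x‖ ≤ C) :
    IntegrableAtFilter (slope (g • u) a) (𝓝 a) μ := by
  have leibniz : slope (g • u) a = (fun x ↦ slope g a x • u x) + g a • slope u a := by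
    ext x
    simp only [slope, vsub_eq_sub, Pi.smul_apply', Pi.add_apply, Pi.smul_apply, smul_eq_mul]
    module
  obtain ⟨s, hs, hgs⟩ := hga
  rw [leibniz]
  exact IntegrableAtFilter.add ⟨s, hs, hgs.smul_bdd C hu.restrict (.of_forall hC)⟩ (hua.smul (g a))

lemma integrable_slope_of_integrableAtFilter {g : ℝ → E} (hg : Integrable g μ) (hg0 : g a = 0)
    (hga : IntegrableAtFilter (slope g a) (𝓝 a) μ) : Integrable (slope g a) μ := by
  obtain ⟨s, hs, hgs⟩ := hga
  obtain ⟨ε, hε, hball⟩ := Metric.mem_nhds_iff.1 hs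
  have away : IntegrableOn (slope g a) (Metric.ball a ε)ᶜ μ := by
    refine (hg.norm.const_mul ε⁻¹).integrableOn.mono'
      (aestronglyMeasurable_slope hg.aestronglyMeasurable).restrict ?_
    filter_upwards [ae_restrict_mem Metric.isOpen_ball.measurableSet.compl] with x hx
    have hεx : ε ≤ ‖x - a‖ := by simpa [dist_eq_norm] using hx
    simp only [slope, vsub_eq_sub, hg0, sub_zero, norm_smul, norm_inv]
    gcongr
  rw [← integrableOn_univ, ← Set.union_compl_self (Metric.ball a ε)]
  exact (hgs.mono_set hball).union away

end Dini

lemma tendsto_integral_cexp_mul_I_smul_cocompact {E : Type*} [NormedAddCommGroup E]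
    [NormedSpace ℂ E] (k : ℝ → E) :
    Tendsto (fun a : ℝ ↦ ∫ x : ℝ, Complex.exp (a * x * Complex.I) • k x) (cocompact ℝ) (𝓝 0) := by
  have scale : Tendsto (fun a : ℝ ↦ -(2 * π)⁻¹ * a) (cocompact ℝ) (cocompact ℝ) :=
    tendsto_cocompact_mul_left₀ (by simp [pi_ne_zero])
  refine ((Real.tendsto_integral_exp_smul_cocompact k).comp scale).congr fun a ↦ ?_
  refine integral_congr_ae (.of_forall fun x ↦ ?_)
  have phase : 2 * π * -(x * (-(2 * π)⁻¹ * a)) = a * x := by field_simp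
  simp only [Circle.smul_def, fourierChar_apply, phase, Complex.ofReal_mul]

lemma tendsto_integral_sin_mul_div_of_integrable_charFun {μ : Measure ℝ} [IsFiniteMeasure μ]
    [NullSingletonClass μ] (hμ : Integrable (charFun μ)) :
    Tendsto (fun a : ℝ ↦ ((∫ x, sin (a * x) / x ∂μ : ℝ) : ℂ)) atTop
      (𝓝 ((∫ t, charFun μ t) / 2)) := by
  refine ((intervalIntegral_tendsto_integral hμ tendsto_neg_atTop_atBot tendsto_id).div_const
    2).congr' ?_
  filter_upwards [eventually_gt_atTop 0] with a ha
  have sinc_eq : ∫ x, sin (a * x) / x ∂μ = a * ∫ x, sinc (a * x) ∂μ := by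
    rw [← integral_const_mul]
    refine integral_congr_ae ?_
    filter_upwards [Measure.ae_ne μ 0] with x hx
    rw [sinc_of_ne_zero (mul_ne_zero ha.ne' hx)]
    field_simp
  rw [id, integral_charFun_Icc ha, sinc_eq]
  push_cast
  ring

lemma sqrt_pi_div_half_eq_gaussianPDFReal {v : ℝ≥0} (hv : v ≠ 0) :
    √(π / (v / 2)) / 2 = π * gaussianPDFReal 0 v 0 := by
  have sqrt_mul_sqrt : √(π / (v / 2)) * √(2 * π * v) = 2 * π := by
    rw [← sqrt_mul (by positivity), sqrt_eq_iff_mul_self_eq (by positivity) (by positivity)]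
    field_simp
  have pdf_zero : gaussianPDFReal 0 v 0 = (√(2 * π * v))⁻¹ := by simp [gaussianPDFReal]
  rw [pdf_zero, eq_mul_inv_iff_mul_eq₀ (by positivity), div_mul_eq_mul_div, sqrt_mul_sqrt]
  ring

lemma tendsto_integral_gaussianPDFReal_mul_sin_div {v : ℝ≥0} (hv : v ≠ 0) :
    Tendsto (fun a : ℝ ↦ ∫ x, gaussianPDFReal 0 v x * (sin (a * x) / x)) atTop
      (𝓝 (π * gaussianPDFReal 0 v 0)) := by
  have charFun_eq : charFun (gaussianReal 0 v) = fun t ↦ ((exp (-(v / 2) * t ^ 2) : ℝ) : ℂ) := by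
    ext t
    rw [charFun_gaussianReal]
    push_cast
    ring_nf
  have charFun_int : Integrable (charFun (gaussianReal 0 v)) := by
    rw [charFun_eq]
    exact (integrable_exp_neg_mul_sq (by positivity)).ofReal
  have : NullSingletonClass (gaussianReal 0 v) := nullSingletonClass_gaussianReal hv
  have lim := (Complex.continuous_re.tendsto _).comp
    (tendsto_integral_sin_mul_div_of_integrable_charFun charFun_int)
  simpa only [Function.comp_def, Complex.ofReal_re, charFun_eq, integral_complex_ofReal,
    integral_gaussian, Complex.div_ofNat_re, sqrt_pi_div_half_eq_gaussianPDFReal hv,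
    integral_gaussianReal_eq_integral_smul hv, smul_eq_mul] using lim

lemma integrable_mul_sin_div {g : ℝ → ℝ} {μ : Measure ℝ} (hg : Integrable g μ) (a : ℝ) :
    Integrable (fun x ↦ g x * (sin (a * x) / x)) μ := by
  refine hg.mul_bdd (c := |a|) (by fun_prop : Measurable _).aestronglyMeasurable
    (.of_forall fun x ↦ ?_)
  rw [norm_div, norm_eq_abs, norm_eq_abs]
  exact div_le_of_le_mul₀ (abs_nonneg x) (abs_nonneg a) (abs_mul a x ▸ abs_sin_le_abs)

lemma lipschitzWith_cexp_ofReal_mul_I :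
    LipschitzWith 1 fun t : ℝ ↦ Complex.exp (t * Complex.I) := by
  refine LipschitzWith.of_dist_le_mul fun s t ↦ ?_
  have factor : Complex.exp (s * Complex.I) - Complex.exp (t * Complex.I) =
      Complex.exp (t * Complex.I) * (Complex.exp (Complex.I * (s - t : ℝ)) - 1) := by
    rw [mul_sub, ← Complex.exp_add]
    push_cast
    ring_nf
  rw [dist_eq_norm, dist_eq_norm, factor, norm_mul, Complex.norm_exp_ofReal_mul_I, one_mul,
    NNReal.coe_one, one_mul]
  exact norm_exp_I_mul_ofReal_sub_one_le

lemma integrable_cexp_mul_I_mul {k : ℝ → ℂ} {μ : Measure ℝ} (hk : Integrable k μ) (a : ℝ) :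
    Integrable (fun x : ℝ ↦ Complex.exp (a * x * Complex.I) * k x) μ :=
  hk.bdd_mul (c := 1) (by fun_prop : Continuous _).aestronglyMeasurable (.of_forall fun x ↦ by
    exact_mod_cast (Complex.norm_exp_ofReal_mul_I (a * x)).le)

lemma tendsto_integral_im_cexp_mul_atTop {k : ℝ → ℂ} (hk : Integrable k) :
    Tendsto (fun a : ℝ ↦ ∫ x : ℝ, (Complex.exp (a * x * Complex.I) * k x).im) atTop (𝓝 0) := by
  have lim := (Complex.continuous_im.tendsto 0).comp
    ((tendsto_integral_cexp_mul_I_smul_cocompact k).mono_left atTop_le_cocompact)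
  exact lim.congr fun a ↦ (integral_im (𝕜 := ℂ) (integrable_cexp_mul_I_mul hk a)).symm

lemma tendsto_integral_im_cexp_mul_div {ψ : ℝ → ℂ} {c : ℝ} (hψ : Integrable ψ) (hψ0 : ψ 0 = c)
    (hψ' : IntegrableAtFilter (slope ψ 0) (𝓝 0)) :
    Tendsto (fun a : ℝ ↦ ∫ x : ℝ, (Complex.exp (a * x * Complex.I) * ψ x).im / x) atTop
      (𝓝 (π * c)) := by
  let G : ℝ → ℝ := gaussianPDFReal 0 1
  let r : ℝ := c / G 0
  have hr : r * G 0 = c := div_mul_cancel₀ _ (gaussianPDFReal_pos 0 1 0 one_ne_zero).ne'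
  let rG : ℝ → ℂ := fun x ↦ (r * G x : ℝ)
  have rG_int : Integrable rG := ((integrable_gaussianPDFReal 0 1).const_mul r).ofReal
  have rG_diff : Differentiable ℝ rG := by
    simp only [rG, G, gaussianPDFReal_def]
    fun_prop
  have sub_zero_eq : (ψ - rG) 0 = 0 := by simp only [Pi.sub_apply, rG, hψ0, hr, sub_self]
  have slope_int : Integrable (slope (ψ - rG) 0) := by
    refine integrable_slope_of_integrableAtFilter (hψ.sub rG_int) sub_zero_eq ?_
    rw [slope_sub]
    exact hψ'.sub (integrableAtFilter_slope_of_differentiableAt rG_int.aestronglyMeasurable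
      (rG_diff 0))
  have split (a x : ℝ) : (Complex.exp (a * x * Complex.I) * ψ x).im / x =
      (Complex.exp (a * x * Complex.I) * slope (ψ - rG) 0 x).im +
        r * (G x * (sin (a * x) / x)) := by
    have im_exp : (Complex.exp (a * x * Complex.I)).im = sin (a * x) := by
      exact_mod_cast Complex.exp_ofReal_mul_I_im (a * x)
    simp only [slope, vsub_eq_sub, sub_zero_eq, sub_zero, mul_smul_comm, Complex.smul_im,
      Pi.sub_apply, mul_sub, Complex.sub_im, rG, Complex.im_mul_ofReal, im_exp, smul_eq_mul]
    ring
  have lim := (tendsto_integral_im_cexp_mul_atTop slope_int).add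
    ((tendsto_integral_gaussianPDFReal_mul_sin_div one_ne_zero).const_mul r)
  rw [zero_add, mul_left_comm, hr] at lim
  refine lim.congr fun a ↦ ?_
  rw [← integral_const_mul]
  simp only [split]
  exact (integral_add (integrable_cexp_mul_I_mul slope_int a).im
    ((integrable_mul_sin_div (integrable_gaussianPDFReal 0 1) a).const_mul r)).symm

theorem sin_kernel_tendsto_delta_general {f φ : ℝ → ℝ} (hf : AEStronglyMeasurable f)
    (hf0 : f 0 = 0) (hf' : IntegrableAtFilter (slope f 0) (𝓝 0)) (hφ : Integrable φ)
    (hφ' : IntegrableAtFilter (slope φ 0) (𝓝 0)) :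
    Tendsto (fun a : ℝ ↦ ∫ η : ℝ, φ η * (sin (a * η + f η) / (π * η))) atTop (𝓝 (φ 0)) := by
  set u : ℝ → ℂ := (fun t : ℝ ↦ Complex.exp (t * Complex.I)) ∘ f
  have u_meas : AEStronglyMeasurable u :=
    lipschitzWith_cexp_ofReal_mul_I.continuous.comp_aestronglyMeasurable hf
  have norm_u (x : ℝ) : ‖u x‖ ≤ 1 := (Complex.norm_exp_ofReal_mul_I (f x)).le
  have slope_u : IntegrableAtFilter (slope u 0) (𝓝 0) :=
    integrableAtFilter_slope_lipschitz_comp lipschitzWith_cexp_ofReal_mul_I hf hf'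
  have lim := (tendsto_integral_im_cexp_mul_div (hφ.smul_bdd 1 u_meas (.of_forall norm_u))
    (c := φ 0) (by simp [u, hf0])
    (integrableAtFilter_slope_smul hφ' u_meas slope_u norm_u)).const_mul π⁻¹
  rw [inv_mul_cancel_left₀ pi_ne_zero] at lim
  refine lim.congr fun a ↦ ?_
  rw [← integral_const_mul]
  refine integral_congr_ae (.of_forall fun η ↦ ?_)
  have im_eq : (Complex.exp (a * η * Complex.I) * (φ • u) η).im = φ η * sin (a * η + f η) := by
    simp only [u, Pi.smul_apply', Function.comp_apply, mul_smul_comm, Complex.smul_im,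
      ← Complex.exp_add, ← add_mul]
    exact_mod_cast congrArg (φ η * ·) (Complex.exp_ofReal_mul_I_im (a * η + f η))
  simp only [im_eq]
  field_simp

theorem sin_kernel_tendsto_delta (f : ℝ → ℝ) (hf : ∀ x : ℝ, AnalyticAt ℝ f x)
    (hf0 : f 0 = 0) (φ : ℝ → ℝ) (hφ : ContDiff ℝ (⊤ : ℕ∞) φ) (hφc : HasCompactSupport φ) :
    Tendsto (fun a : ℝ => ∫ η : ℝ, φ η * (Real.sin (a * η + f η) / (π * η)))
      atTop (nhds (φ 0)) := by
  have f_cont : Continuous f := continuous_iff_continuousAt.2 fun x ↦ (hf x).continuousAt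
  exact sin_kernel_tendsto_delta_general f_cont.aestronglyMeasurable hf0
    (integrableAtFilter_slope_of_differentiableAt f_cont.aestronglyMeasurable
      (hf 0).differentiableAt)
    (hφ.continuous.integrable_of_hasCompactSupport hφc)
    (integrableAtFilter_slope_of_differentiableAt hφ.continuous.aestronglyMeasurable
      (hφ.differentiable (by simp) 0))
end

section
/- Orthogonality of the Macdonald functions of imaginary order (main result, ν, ν' > 0): fix a real ν > 0. For every smooth compactly supported test function φ : ℝ → ℝ with support contained in (0, ∞), lim_{ξ → 0+} ∫_0^∞ φ(ν') · ( ∫_ξ^∞ K_{iν}(x) K_{iν'}(x) / x dx ) dν' = (π² / (2 ν sinh(πν))) · φ(ν). This is the precise distributional meaning of the orthogonality relation ∫_0^∞ K_{iν}(x) K_{iν'}(x)/x dx = (π²/(2ν sinh(πν))) · δ(ν − ν') for ν, ν' > 0. -/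
open Real Filter MeasureTheory

/-!
Integration by parts gives `v K_{iv}(x) / x = ∫_0^∞ e^{-x cosh t} sinh t sin(vt) dt`. Writing
`φ(v) = v f(v)`, the average of `K_{iv}(x) / x` against `φ` is therefore the Laplace transform, in
the variable `cosh t`, of the sine transform `h(t) = ∫_0^∞ f(v) sin(vt) dv`. Moving this Laplace
transform onto the other factor and using
`sinh t ∫_0^∞ e^{-x cosh t} K_{iν}(x) dx = π sin(νt) / sinh(πν)`, the limit `ξ → 0` becomes
`π / sinh(πν) ∫_0^∞ h(t) sin(νt) dt = π² f(ν) / (2 sinh(πν))` by the sine inversion theorem.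
The left side of the displayed formula equals `t` when `ν = 0`; as `|K_{iν}| ≤ K_0`, this makes
`t |h(t)|` an integrable majorant, which justifies both the interchange and the limit.

The Laplace transform of `K_{iν}` is the cosine transform of `sinh t / (cosh s + cosh t)`. The
latter is an average of translates of the density of the logistic distribution, whose
characteristic function `πν / sinh(πν)` is a Beta integral.
-/

open Set
open scoped ContDiff FourierTransform Topology

section Logistic

lemma deriv_sigmoid_eq_mul_neg (s : ℝ) : deriv sigmoid s = sigmoid s * sigmoid (-s) := by
  rw [deriv_sigmoid, sigmoid_neg]

lemma deriv_sigmoid_pos (s : ℝ) : 0 < deriv sigmoid s := by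
  rw [deriv_sigmoid_eq_mul_neg]
  exact mul_pos (sigmoid_pos s) (sigmoid_pos (-s))

@[fun_prop]
lemma continuous_deriv_sigmoid : Continuous (deriv sigmoid) :=
  contDiff_sigmoid.continuous_deriv le_top

lemma integral_deriv_sigmoid_smul_comp {E : Type*} [NormedAddCommGroup E] [NormedSpace ℝ E]
    (g : ℝ → E) : ∫ s, deriv sigmoid s • g (sigmoid s) = ∫ x in Ioo 0 1, g x := by
  have h := integral_image_eq_integral_abs_deriv_smul MeasurableSet.univ
    (fun s _ ↦ (differentiable_sigmoid s).hasDerivAt.hasDerivWithinAt)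
    sigmoid_injective.injOn g
  rw [image_univ, range_sigmoid, setIntegral_univ] at h
  simp_rw [h, abs_of_pos (deriv_sigmoid_pos _)]

lemma integral_deriv_sigmoid : ∫ s, deriv sigmoid s = 1 := by
  simpa using integral_deriv_sigmoid_smul_comp fun _ ↦ (1 : ℝ)

lemma integrable_deriv_sigmoid : Integrable (deriv sigmoid) :=
  integrable_of_integral_eq_one integral_deriv_sigmoid

lemma betaIntegral_eq_integral_sigmoid (u v : ℂ) :
    Complex.betaIntegral u v = ∫ s : ℝ, (sigmoid s : ℂ) ^ u * (sigmoid (-s) : ℂ) ^ v := by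
  have cpow_eq_mul {x : ℝ} (hx : 0 < x) (w : ℂ) : (x : ℂ) ^ w = x * (x : ℂ) ^ (w - 1) := by
    have hx' : (x : ℂ) ≠ 0 := by exact_mod_cast hx.ne'
    rw [Complex.cpow_sub _ _ hx', Complex.cpow_one, mul_div_cancel₀ _ hx']
  rw [Complex.betaIntegral, intervalIntegral.integral_of_le zero_le_one,
    integral_Ioc_eq_integral_Ioo, ← integral_deriv_sigmoid_smul_comp]
  congr with s
  rw [cpow_eq_mul (sigmoid_pos s) u, cpow_eq_mul (sigmoid_pos (-s)) v, deriv_sigmoid_eq_mul_neg,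
    sigmoid_neg, Complex.real_smul]
  push_cast
  ring

lemma betaIntegral_one_add_one_sub {z : ℂ} (hz : z ≠ 0) (hre : |z.re| < 1) :
    Complex.betaIntegral (1 + z) (1 - z) = π * z / Complex.sin (π * z) := by
  obtain ⟨hlt, hgt⟩ := abs_lt.1 hre
  have h := Complex.Gamma_mul_Gamma_eq_betaIntegral (s := 1 + z) (t := 1 - z)
    (by simpa using by linarith) (by simpa using hgt)
  rw [add_comm 1 z, Complex.Gamma_add_one z hz, mul_assoc, Complex.Gamma_mul_Gamma_one_sub,
    show z + 1 + (1 - z) = 2 by ring, Complex.Gamma_ofNat_eq_factorial] at h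
  rw [add_comm 1 z, mul_div_right_comm, mul_comm _ z]
  simpa using h.symm

lemma sigmoid_cpow_mul_sigmoid_neg_cpow (z : ℂ) (s : ℝ) :
    (sigmoid s : ℂ) ^ (1 + z) * (sigmoid (-s) : ℂ) ^ (1 - z) =
      Complex.exp (z * s) * deriv sigmoid s := by
  have hpos : (sigmoid s : ℂ) ≠ 0 := by exact_mod_cast (sigmoid_pos s).ne'
  have hneg : (sigmoid (-s) : ℂ) ≠ 0 := by exact_mod_cast (sigmoid_pos (-s)).ne'
  have hratio : (sigmoid s : ℂ) ^ z = (sigmoid (-s) : ℂ) ^ z * Complex.exp (z * s) := by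
    have hs : sigmoid s = sigmoid (-s) * rexp s := by
      simpa using (sigmoid_mul_rexp_neg (-s)).symm
    rw [hs, Complex.ofReal_mul, Complex.mul_cpow_ofReal_nonneg (sigmoid_nonneg _) (exp_pos s).le,
      Complex.cpow_def_of_ne_zero (x := (rexp s : ℂ)) (by exact_mod_cast (exp_pos s).ne'),
      ← Complex.ofReal_log (exp_pos s).le, log_exp, mul_comm (s : ℂ)]
  have hcpow : (sigmoid (-s) : ℂ) ^ z ≠ 0 := by simp [Complex.cpow_eq_zero_iff, hneg]
  rw [Complex.cpow_add _ _ hpos, Complex.cpow_sub _ _ hneg, hratio, deriv_sigmoid_eq_mul_neg,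
    Complex.cpow_one, Complex.cpow_one]
  push_cast
  field_simp

lemma integral_exp_mul_deriv_sigmoid {z : ℂ} (hz : z ≠ 0) (hre : |z.re| < 1) :
    ∫ s : ℝ, Complex.exp (z * s) * deriv sigmoid s = π * z / Complex.sin (π * z) := by
  simp_rw [← sigmoid_cpow_mul_sigmoid_neg_cpow, ← betaIntegral_eq_integral_sigmoid]
  exact betaIntegral_one_add_one_sub hz hre

lemma integral_cos_mul_deriv_sigmoid {ν : ℝ} (hν : ν ≠ 0) :
    ∫ s, cos (ν * s) * deriv sigmoid s = π * ν / sinh (π * ν) := by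
  have hre (s : ℝ) : cos (ν * s) * deriv sigmoid s =
      RCLike.re (Complex.exp (ν * Complex.I * s) * deriv sigmoid s) := by
    rw [show (ν * Complex.I * s : ℂ) = (ν * s : ℝ) * Complex.I by push_cast; ring,
      RCLike.re_eq_complex_re, Complex.re_mul_ofReal, Complex.exp_ofReal_mul_I_re]
  have hint : Integrable fun s : ℝ ↦ Complex.exp (ν * Complex.I * s) * deriv sigmoid s :=
    integrable_deriv_sigmoid.ofReal.bdd_mul (c := 1) (by fun_prop) <|
      .of_forall fun s ↦ by simp [Complex.norm_exp]
  simp_rw [hre]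
  rw [integral_re hint, integral_exp_mul_deriv_sigmoid (by simpa using hν) (by simp),
    ← mul_assoc, Complex.sin_mul_I, mul_div_mul_right _ _ Complex.I_ne_zero]
  norm_cast

end Logistic

section HyperbolicKernel

variable {f : ℝ → ℝ} {t : ℝ}

lemma integrable_prod_comp_sub (hf : Integrable f) (μ : Measure ℝ) [IsFiniteMeasure μ] :
    Integrable (fun p : ℝ × ℝ ↦ f (p.1 - p.2)) (volume.prod μ) := by
  simpa using (integrable_const (1 : ℝ) (μ := μ)).convolution_integrand
    (ContinuousLinearMap.lsmul ℝ ℝ) hf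

lemma integral_cos_mul_comp_sub (hf : Integrable f) (ν u : ℝ) :
    ∫ s, cos (ν * s) * f (s - u) =
      cos (ν * u) * (∫ s, cos (ν * s) * f s) - sin (ν * u) * ∫ s, sin (ν * s) * f s := by
  have hcos : Integrable fun s ↦ cos (ν * s) * f s :=
    hf.bdd_mul (c := 1) (by fun_prop) (.of_forall fun s ↦ abs_cos_le_one _)
  have hsin : Integrable fun s ↦ sin (ν * s) * f s :=
    hf.bdd_mul (c := 1) (by fun_prop) (.of_forall fun s ↦ abs_sin_le_one _)
  rw [← integral_add_right_eq_self _ u, ← integral_const_mul, ← integral_const_mul,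
    ← integral_sub (hcos.const_mul _) (hsin.const_mul _)]
  congr with s
  rw [mul_add, cos_add, add_sub_cancel_right]
  ring

lemma intervalIntegral_sin_mul_neg_self (ν t : ℝ) : ∫ u in -t..t, sin (ν * u) = 0 := by
  have h := intervalIntegral.integral_comp_neg (a := -t) (b := t) fun u ↦ sin (ν * u)
  simp only [mul_neg, sin_neg, intervalIntegral.integral_neg, neg_neg] at h
  linarith

lemma integral_cos_mul_intervalIntegral_comp_sub (hf : Integrable f) (ν : ℝ) (ht : 0 ≤ t) :
    ∫ s, cos (ν * s) * ∫ u in -t..t, f (s - u) =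
      (∫ u in -t..t, cos (ν * u)) * ∫ s, cos (ν * s) * f s := by
  have hint : Integrable (Function.uncurry fun s u ↦ cos (ν * s) * f (s - u))
      (volume.prod (volume.restrict (Ioc (-t) t))) :=
    (integrable_prod_comp_sub hf _).bdd_mul (c := 1) (by fun_prop)
      (.of_forall fun p ↦ abs_cos_le_one _)
  have hle : -t ≤ t := by linarith
  calc ∫ s, cos (ν * s) * ∫ u in -t..t, f (s - u)
      = ∫ u in -t..t, ∫ s, cos (ν * s) * f (s - u) := by
        simp_rw [intervalIntegral.integral_of_le hle, ← integral_const_mul]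
        exact integral_integral_swap hint
    _ = ∫ u in -t..t, (cos (ν * u) * (∫ s, cos (ν * s) * f s) -
          sin (ν * u) * ∫ s, sin (ν * s) * f s) := by
        simp_rw [integral_cos_mul_comp_sub hf]
    _ = (∫ u in -t..t, cos (ν * u)) * ∫ s, cos (ν * s) * f s := by
        rw [intervalIntegral.integral_sub (Continuous.intervalIntegrable (by fun_prop) _ _)
          (Continuous.intervalIntegrable (by fun_prop) _ _)]
        simp_rw [intervalIntegral.integral_mul_const, intervalIntegral_sin_mul_neg_self, zero_mul,
          sub_zero]

lemma sinh_div_cosh_add_cosh (s t : ℝ) :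
    sinh t / (cosh s + cosh t) = sigmoid (s + t) - sigmoid (s - t) := by
  rw [sigmoid_def, sigmoid_def, cosh_eq, cosh_eq, sinh_eq, neg_add, neg_sub, exp_add, exp_sub,
    exp_neg, exp_neg]
  have := exp_pos s
  have := exp_pos t
  field_simp
  ring

-- The kernel is the logistic density `deriv sigmoid` averaged over a window, so that its cosine
-- transform is a product.
lemma sinh_div_cosh_add_cosh_eq_intervalIntegral (s t : ℝ) :
    sinh t / (cosh s + cosh t) = ∫ u in -t..t, deriv sigmoid (s - u) := by
  rw [intervalIntegral.integral_comp_sub_left (deriv sigmoid), sub_neg_eq_add,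
    intervalIntegral.integral_deriv_eq_sub (fun x _ ↦ differentiable_sigmoid x)
      (continuous_deriv_sigmoid.intervalIntegrable _ _), sinh_div_cosh_add_cosh]

lemma integrable_sinh_div_cosh_add_cosh (ht : 0 ≤ t) :
    Integrable fun s ↦ sinh t / (cosh s + cosh t) := by
  simp_rw [sinh_div_cosh_add_cosh_eq_intervalIntegral,
    intervalIntegral.integral_of_le (show -t ≤ t by linarith)]
  exact (integrable_prod_comp_sub integrable_deriv_sigmoid _).integral_prod_left

lemma integral_Ioi_cos_mul_sinh_div_cosh_add_cosh (ν : ℝ) (ht : 0 ≤ t) :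
    ∫ s in Ioi 0, cos (ν * s) * (sinh t / (cosh s + cosh t)) =
      (∫ u in -t..t, cos (ν * u)) / 2 * ∫ s, cos (ν * s) * deriv sigmoid s := by
  have half : ∫ s, cos (ν * s) * (sinh t / (cosh s + cosh t)) =
      2 * ∫ s in Ioi 0, cos (ν * s) * (sinh t / (cosh s + cosh t)) := by
    rw [← integral_comp_abs (f := fun s ↦ cos (ν * s) * (sinh t / (cosh s + cosh t)))]
    congr with s
    rcases abs_choice s with h | h <;> simp [h]
  simp_rw [sinh_div_cosh_add_cosh_eq_intervalIntegral] at half ⊢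
  rw [integral_cos_mul_intervalIntegral_comp_sub integrable_deriv_sigmoid ν ht] at half
  linarith

lemma integral_Ioi_sinh_div_cosh_add_cosh (ht : 0 ≤ t) :
    ∫ s in Ioi 0, sinh t / (cosh s + cosh t) = t := by
  simpa [integral_deriv_sigmoid, ← two_mul] using integral_Ioi_cos_mul_sinh_div_cosh_add_cosh 0 ht

lemma integral_Ioi_cos_mul_sinh_div_cosh_add_cosh_of_ne_zero {ν : ℝ} (hν : ν ≠ 0) (ht : 0 ≤ t) :
    ∫ s in Ioi 0, cos (ν * s) * (sinh t / (cosh s + cosh t)) =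
      π / sinh (π * ν) * sin (ν * t) := by
  rw [integral_Ioi_cos_mul_sinh_div_cosh_add_cosh ν ht, integral_cos_mul_deriv_sigmoid hν,
    intervalIntegral.integral_comp_mul_left cos hν, integral_cos]
  simp only [mul_neg, sin_neg, smul_eq_mul]
  field_simp
  ring

end HyperbolicKernel

section Kim

variable {ν ξ x t : ℝ}

lemma exp_neg_mul_cosh_mul_cosh_le (hx : 0 < x) (t : ℝ) :
    exp (-x * cosh t) * cosh t ≤ 8 / x ^ 2 * deriv sigmoid t := by
  have hsigmoid : deriv sigmoid t = 1 / (2 * (cosh t + 1)) := by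
    rw [deriv_sigmoid_eq_mul_neg, sigmoid_def, sigmoid_def, cosh_eq, neg_neg, exp_neg]
    have := exp_pos t
    field_simp
    ring
  have hcosh := one_le_cosh t
  have hquad := quadratic_le_exp_of_nonneg (x := x * cosh t) (by positivity)
  calc exp (-x * cosh t) * cosh t = (exp (x * cosh t))⁻¹ * cosh t := by rw [neg_mul, exp_neg]
    _ ≤ ((x * cosh t) ^ 2 / 2)⁻¹ * cosh t := by
        gcongr
        nlinarith
    _ = 8 / x ^ 2 * (1 / (4 * cosh t)) := by field_simp; norm_num
    _ ≤ 8 / x ^ 2 * deriv sigmoid t := by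
        rw [hsigmoid]
        refine mul_le_mul_of_nonneg_left (one_div_le_one_div_of_le (by positivity) ?_)
          (by positivity)
        linarith

lemma integrable_exp_neg_mul_cosh_mul_cosh (hx : 0 < x) :
    Integrable fun t ↦ exp (-x * cosh t) * cosh t := by
  refine (integrable_deriv_sigmoid.const_mul (8 / x ^ 2)).mono' (by fun_prop)
    (.of_forall fun t ↦ ?_)
  rw [norm_of_nonneg (by positivity)]
  exact exp_neg_mul_cosh_mul_cosh_le hx t

lemma integrable_exp_neg_mul_cosh_mul (hx : 0 < x) {g : ℝ → ℝ} (hg : Continuous g)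
    (hle : ∀ t, |g t| ≤ cosh t) : Integrable fun t ↦ exp (-x * cosh t) * g t := by
  refine (integrable_exp_neg_mul_cosh_mul_cosh hx).mono' (by fun_prop) (.of_forall fun t ↦ ?_)
  rw [norm_mul, norm_of_nonneg (exp_pos _).le]
  gcongr
  exact hle t

lemma integrable_exp_neg_mul_cosh_mul_cos (hx : 0 < x) (ν : ℝ) :
    Integrable fun t ↦ exp (-x * cosh t) * cos (ν * t) :=
  integrable_exp_neg_mul_cosh_mul hx (by fun_prop) fun t ↦
    (abs_cos_le_one _).trans (one_le_cosh t)

lemma abs_sinh_le_cosh (t : ℝ) : |sinh t| ≤ cosh t := by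
  rw [abs_sinh, ← cosh_abs]
  exact (sinh_lt_cosh _).le

lemma integrable_exp_neg_mul_cosh_mul_sinh (hx : 0 < x) :
    Integrable fun t ↦ exp (-x * cosh t) * sinh t :=
  integrable_exp_neg_mul_cosh_mul hx continuous_sinh abs_sinh_le_cosh

lemma stronglyMeasurable_uncurry_Kim : StronglyMeasurable (Function.uncurry Kim) :=
  StronglyMeasurable.integral_prod_right (f := fun (p : ℝ × ℝ) t ↦
    exp (-p.2 * cosh t) * cos (p.1 * t)) (Continuous.stronglyMeasurable (by fun_prop))

lemma abs_Kim_le (hξ : 0 < ξ) (hx : ξ ≤ x) (ν : ℝ) : |Kim ν x| ≤ exp (ξ - x) * Kim 0 ξ := by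
  have hint := ((integrable_exp_neg_mul_cosh_mul_cos hξ 0).const_mul (exp (ξ - x))).integrableOn
    (s := Ioi 0)
  rw [← norm_eq_abs, Kim, Kim, ← integral_const_mul]
  refine norm_integral_le_of_norm_le hint (.of_forall fun t ↦ ?_)
  have hcosh := one_le_cosh t
  rw [norm_mul, norm_of_nonneg (exp_pos _).le, zero_mul, cos_zero, mul_one, ← exp_add]
  refine (mul_le_of_le_one_right (exp_pos _).le (abs_cos_le_one _)).trans (exp_le_exp.2 ?_)
  nlinarith

lemma abs_Kim_le_Kim_zero (hx : 0 < x) (ν : ℝ) : |Kim ν x| ≤ Kim 0 x := by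
  simpa using abs_Kim_le hx le_rfl ν

lemma integral_Ioi_exp_neg_mul {c : ℝ} (hc : 0 < c) : ∫ x in Ioi 0, exp (-x * c) = c⁻¹ := by
  simpa [mul_comm, neg_div] using integral_exp_mul_Ioi (neg_neg_of_pos hc) 0

lemma integrableOn_Ioi_exp_neg_mul {c : ℝ} (hc : 0 < c) :
    IntegrableOn (fun x ↦ exp (-x * c)) (Ioi 0) := by
  simpa [mul_comm] using integrableOn_exp_mul_Ioi (neg_neg_of_pos hc) 0

lemma exp_neg_mul_cosh_mul_exp_neg_mul_cosh_mul_cos (ν x s t : ℝ) :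
    exp (-x * cosh t) * (exp (-x * cosh s) * cos (ν * s)) =
      cos (ν * s) * exp (-x * (cosh s + cosh t)) := by
  rw [mul_add, exp_add]
  ring

lemma integrable_exp_neg_mul_cosh_mul_exp_neg_mul_cosh_mul_cos (ν : ℝ) (ht : 0 < t) :
    Integrable (Function.uncurry fun x s ↦ exp (-x * cosh t) * (exp (-x * cosh s) * cos (ν * s)))
      ((volume.restrict (Ioi 0)).prod (volume.restrict (Ioi 0))) := by
  have hpos (s : ℝ) : 0 < cosh s + cosh t := by positivity
  have hinv : Integrable fun s ↦ (cosh s + cosh t)⁻¹ := by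
    simpa [div_eq_mul_inv, (sinh_pos_iff.2 ht).ne'] using
      (integrable_sinh_div_cosh_add_cosh ht.le).const_mul (sinh t)⁻¹
  simp_rw [exp_neg_mul_cosh_mul_exp_neg_mul_cosh_mul_cos]
  refine (integrable_prod_iff' (Continuous.aestronglyMeasurable (by fun_prop))).2
    ⟨.of_forall fun s ↦ (integrableOn_Ioi_exp_neg_mul (hpos s)).const_mul (cos (ν * s)), ?_⟩
  simp only [Function.uncurry_apply_pair, norm_mul, norm_of_nonneg (exp_pos _).le,
    integral_const_mul, integral_Ioi_exp_neg_mul (hpos _)]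
  exact (hinv.bdd_mul (c := 1) (by fun_prop)
    (.of_forall fun s ↦ by simpa using abs_cos_le_one _)).integrableOn

lemma integrableOn_exp_neg_mul_cosh_mul_Kim (ν : ℝ) (ht : 0 < t) :
    IntegrableOn (fun x ↦ exp (-x * cosh t) * Kim ν x) (Ioi 0) := by
  simp only [Kim, IntegrableOn]
  simpa only [Function.uncurry_apply_pair, integral_const_mul] using
    (integrable_exp_neg_mul_cosh_mul_exp_neg_mul_cosh_mul_cos ν ht).integral_prod_left

lemma sinh_mul_integral_exp_neg_mul_cosh_mul_Kim_eq (ν : ℝ) (ht : 0 < t) :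
    sinh t * ∫ x in Ioi 0, exp (-x * cosh t) * Kim ν x =
      ∫ s in Ioi 0, cos (ν * s) * (sinh t / (cosh s + cosh t)) := by
  simp_rw [Kim, ← integral_const_mul (exp _)]
  rw [integral_integral_swap (integrable_exp_neg_mul_cosh_mul_exp_neg_mul_cosh_mul_cos ν ht),
    ← integral_const_mul]
  congr with s
  simp_rw [exp_neg_mul_cosh_mul_exp_neg_mul_cosh_mul_cos]
  rw [integral_const_mul, integral_Ioi_exp_neg_mul (by positivity)]
  ring

lemma sinh_mul_integral_exp_neg_mul_cosh_mul_Kim_zero (ht : 0 < t) :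
    sinh t * ∫ x in Ioi 0, exp (-x * cosh t) * Kim 0 x = t := by
  rw [sinh_mul_integral_exp_neg_mul_cosh_mul_Kim_eq 0 ht]
  simpa using integral_Ioi_sinh_div_cosh_add_cosh ht.le

lemma sinh_mul_integral_exp_neg_mul_cosh_mul_Kim (hν : ν ≠ 0) (ht : 0 < t) :
    sinh t * ∫ x in Ioi 0, exp (-x * cosh t) * Kim ν x = π / sinh (π * ν) * sin (ν * t) := by
  rw [sinh_mul_integral_exp_neg_mul_cosh_mul_Kim_eq ν ht,
    integral_Ioi_cos_mul_sinh_div_cosh_add_cosh_of_ne_zero hν ht.le]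

end Kim

section SineTransform

variable {f h : ℝ → ℝ} {ν ξ t x : ℝ}

/-- The sine transform `∫_0^∞ f(v) sin(vt) dv` of a function on the half-line, without
normalising constant. -/
noncomputable def sineTransform (f : ℝ → ℝ) (t : ℝ) : ℝ :=
  ∫ v in Ioi 0, f v * sin (v * t)

/-- The Laplace transform `∫_1^∞ e^{-xu} h(arcosh u) du` of `h ∘ arcosh`, written in the
variable `t = arcosh u`. -/
noncomputable def coshLaplace (h : ℝ → ℝ) (x : ℝ) : ℝ :=
  ∫ t in Ioi 0, exp (-x * cosh t) * (sinh t * h t)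

lemma coshLaplace_sin (hx : 0 < x) (v : ℝ) :
    coshLaplace (fun t ↦ sin (v * t)) x = v * (Kim v x / x) := by
  have hderiv (t : ℝ) : HasDerivAt (fun t ↦ exp (-x * cosh t) * sin (v * t))
      (v * (exp (-x * cosh t) * cos (v * t)) -
        x * (exp (-x * cosh t) * (sinh t * sin (v * t)))) t := by
    have hexp := ((hasDerivAt_cosh t).const_mul (-x)).exp
    have hsin := ((hasDerivAt_id t).const_mul v).sin
    refine (hexp.mul hsin).congr_deriv ?_
    simp only [id]
    ring
  have hint : Integrable fun t ↦ exp (-x * cosh t) * sin (v * t) :=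
    integrable_exp_neg_mul_cosh_mul hx (by fun_prop) fun t ↦
      (abs_sin_le_one _).trans (one_le_cosh t)
  have hcos := ((integrable_exp_neg_mul_cosh_mul_cos hx v).const_mul v).integrableOn (s := Ioi 0)
  have hsin : IntegrableOn (fun t ↦ x * (exp (-x * cosh t) * (sinh t * sin (v * t)))) (Ioi 0) := by
    refine ((integrable_exp_neg_mul_cosh_mul hx (by fun_prop) fun t ↦ ?_).const_mul x).integrableOn
    rw [abs_mul]
    exact (mul_le_of_le_one_right (abs_nonneg _) (abs_sin_le_one _)).trans (abs_sinh_le_cosh t)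
  have hlim := tendsto_zero_of_hasDerivAt_of_integrableOn_Ioi (fun t _ ↦ hderiv t)
    (hcos.sub hsin) hint.integrableOn
  have hparts := integral_Ioi_of_hasDerivAt_of_tendsto' (fun t _ ↦ hderiv t) (hcos.sub hsin) hlim
  rw [integral_sub hcos hsin, integral_const_mul, integral_const_mul, ← Kim, ← coshLaplace]
    at hparts
  simp only [mul_zero, sin_zero, sub_zero] at hparts
  field_simp
  linarith

lemma integral_mul_coshLaplace_sin (hx : 0 < x) (hf : IntegrableOn f (Ioi 0)) :
    ∫ v in Ioi 0, f v * coshLaplace (fun t ↦ sin (v * t)) x =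
      coshLaplace (sineTransform f) x := by
  have hint : Integrable
      (Function.uncurry fun v t ↦ f v * (exp (-x * cosh t) * (sinh t * sin (v * t))))
      ((volume.restrict (Ioi 0)).prod (volume.restrict (Ioi 0))) := by
    refine ((hf.mul_prod (integrable_exp_neg_mul_cosh_mul_sinh hx).restrict).bdd_mul (c := 1)
      (f := fun p ↦ sin (p.1 * p.2)) (by fun_prop) (.of_forall fun p ↦ abs_sin_le_one _)).congr
      (.of_forall fun p ↦ ?_)
    simp only [Function.uncurry]
    ring
  calc ∫ v in Ioi 0, f v * coshLaplace (fun t ↦ sin (v * t)) x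
      = ∫ v in Ioi 0, ∫ t in Ioi 0, f v * (exp (-x * cosh t) * (sinh t * sin (v * t))) := by
        simp_rw [coshLaplace, integral_const_mul]
    _ = ∫ t in Ioi 0, ∫ v in Ioi 0, f v * (exp (-x * cosh t) * (sinh t * sin (v * t))) :=
        integral_integral_swap hint
    _ = coshLaplace (sineTransform f) x := by
        simp_rw [coshLaplace, sineTransform, ← integral_const_mul]
        congr! 4
        ring

lemma integrableOn_Kim_mul_exp_neg_mul_cosh_mul (ν : ℝ) (ht : 0 < t) (c : ℝ) :
    IntegrableOn (fun x ↦ Kim ν x * (exp (-x * cosh t) * (sinh t * c))) (Ioi 0) :=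
  ((integrableOn_exp_neg_mul_cosh_mul_Kim ν ht).mul_const (sinh t * c)).congr
    (.of_forall fun x ↦ by ring)

lemma integral_norm_Kim_mul_exp_neg_mul_cosh_mul_le (ν : ℝ) (ht : 0 < t) (c : ℝ) :
    ∫ x in Ioi 0, ‖Kim ν x * (exp (-x * cosh t) * (sinh t * c))‖ ≤ t * ‖c‖ := by
  have hsinh : 0 < sinh t := sinh_pos_iff.2 ht
  calc ∫ x in Ioi 0, ‖Kim ν x * (exp (-x * cosh t) * (sinh t * c))‖
      ≤ ∫ x in Ioi 0, Kim 0 x * (exp (-x * cosh t) * (sinh t * ‖c‖)) := by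
        refine setIntegral_mono_on (integrableOn_Kim_mul_exp_neg_mul_cosh_mul ν ht c).norm
          (integrableOn_Kim_mul_exp_neg_mul_cosh_mul 0 ht ‖c‖) measurableSet_Ioi fun x hx ↦ ?_
        rw [norm_mul, norm_mul, norm_mul, norm_of_nonneg (exp_pos _).le, norm_of_nonneg hsinh.le]
        gcongr
        exact abs_Kim_le_Kim_zero hx ν
    _ = ‖c‖ * (sinh t * ∫ x in Ioi 0, exp (-x * cosh t) * Kim 0 x) := by
        simp_rw [← integral_const_mul]
        congr! 2
        ring
    _ = t * ‖c‖ := by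
        rw [sinh_mul_integral_exp_neg_mul_cosh_mul_Kim_zero ht, mul_comm]

lemma integrable_Kim_mul_exp_neg_mul_cosh_mul (ν : ℝ)
    (hth : IntegrableOn (fun t ↦ t * h t) (Ioi 0)) :
    Integrable (Function.uncurry fun t x ↦ Kim ν x * (exp (-x * cosh t) * (sinh t * h t)))
      ((volume.restrict (Ioi 0)).prod (volume.restrict (Ioi 0))) := by
  have hh : AEStronglyMeasurable h (volume.restrict (Ioi 0)) := by
    refine (measurable_inv.aestronglyMeasurable.mul hth.aestronglyMeasurable).congr ?_
    filter_upwards [ae_restrict_mem measurableSet_Ioi] with t ht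
    simp [(mem_Ioi.1 ht).ne']
  have hKim : StronglyMeasurable (Kim ν) := stronglyMeasurable_uncurry_Kim.of_uncurry_left
  have hmeas : AEStronglyMeasurable
      (Function.uncurry fun t x ↦ Kim ν x * (exp (-x * cosh t) * (sinh t * h t)))
      ((volume.restrict (Ioi 0)).prod (volume.restrict (Ioi 0))) :=
    hKim.aestronglyMeasurable.comp_snd.mul
      ((Continuous.aestronglyMeasurable (by fun_prop)).mul
        (continuous_sinh.aestronglyMeasurable.mul hh).comp_fst)
  refine (integrable_prod_iff hmeas).2 ⟨?_, hth.norm.mono' hmeas.norm.integral_prod_right' ?_⟩ <;>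
    filter_upwards [ae_restrict_mem measurableSet_Ioi] with t ht
  · exact integrableOn_Kim_mul_exp_neg_mul_cosh_mul ν ht (h t)
  · rw [norm_of_nonneg (integral_nonneg fun _ ↦ norm_nonneg _), norm_mul,
      norm_of_nonneg (mem_Ioi.1 ht).le]
    exact integral_norm_Kim_mul_exp_neg_mul_cosh_mul_le ν ht (h t)

lemma integrableOn_Kim_mul_coshLaplace (ν : ℝ) (hth : IntegrableOn (fun t ↦ t * h t) (Ioi 0)) :
    IntegrableOn (fun x ↦ Kim ν x * coshLaplace h x) (Ioi 0) := by
  simp only [coshLaplace, IntegrableOn]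
  simpa only [Function.uncurry_apply_pair, integral_const_mul] using
    (integrable_Kim_mul_exp_neg_mul_cosh_mul ν hth).integral_prod_right

lemma integral_Kim_mul_coshLaplace (hν : ν ≠ 0) (hth : IntegrableOn (fun t ↦ t * h t) (Ioi 0)) :
    ∫ x in Ioi 0, Kim ν x * coshLaplace h x =
      π / sinh (π * ν) * ∫ t in Ioi 0, h t * sin (ν * t) := by
  calc ∫ x in Ioi 0, Kim ν x * coshLaplace h x
      = ∫ x in Ioi 0, ∫ t in Ioi 0, Kim ν x * (exp (-x * cosh t) * (sinh t * h t)) := by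
        simp_rw [coshLaplace, integral_const_mul]
    _ = ∫ t in Ioi 0, ∫ x in Ioi 0, Kim ν x * (exp (-x * cosh t) * (sinh t * h t)) :=
        (integral_integral_swap (integrable_Kim_mul_exp_neg_mul_cosh_mul ν hth)).symm
    _ = ∫ t in Ioi 0, h t * (sinh t * ∫ x in Ioi 0, exp (-x * cosh t) * Kim ν x) := by
        simp_rw [← integral_const_mul]
        congr! 4
        ring
    _ = ∫ t in Ioi 0, π / sinh (π * ν) * (h t * sin (ν * t)) :=
        setIntegral_congr_fun measurableSet_Ioi fun t ht ↦ by
          rw [sinh_mul_integral_exp_neg_mul_cosh_mul_Kim hν ht]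
          ring
    _ = π / sinh (π * ν) * ∫ t in Ioi 0, h t * sin (ν * t) := integral_const_mul _ _

lemma integrableOn_Ici_Kim (hξ : 0 < ξ) (ν : ℝ) : IntegrableOn (Kim ν) (Ici ξ) := by
  have hKim : StronglyMeasurable (Kim ν) := stronglyMeasurable_uncurry_Kim.of_uncurry_left
  have hexp : IntegrableOn (fun x ↦ exp (ξ - x) * Kim 0 ξ) (Ici ξ) := by
    simp_rw [exp_sub, div_eq_mul_inv, ← exp_neg]
    exact ((((integrableOn_Ici_iff_integrableOn_Ioi).2 (integrableOn_exp_neg_Ioi ξ)).const_mul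
      (exp ξ)).mul_const _)
  refine hexp.mono' hKim.aestronglyMeasurable ?_
  filter_upwards [ae_restrict_mem measurableSet_Ici] with x hx using abs_Kim_le hξ hx ν

lemma abs_Kim_div_le (hξ : 0 < ξ) (hx : ξ ≤ x) (v : ℝ) : |Kim v x / x| ≤ Kim 0 ξ / ξ := by
  have hzero : 0 ≤ Kim 0 ξ := (abs_nonneg _).trans (abs_Kim_le_Kim_zero hξ 0)
  rw [abs_div, abs_of_pos (hξ.trans_le hx)]
  gcongr
  exact (abs_Kim_le hξ hx v).trans (mul_le_of_le_one_left hzero (exp_le_one_iff.2 (by linarith)))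

lemma integral_mul_integral_Ici_Kim_mul_Kim_div (hξ : 0 < ξ) (ν : ℝ)
    (hf : IntegrableOn f (Ioi 0)) (hvf : IntegrableOn (fun v ↦ v * f v) (Ioi 0)) :
    ∫ v in Ioi 0, v * f v * ∫ x in Ici ξ, Kim ν x * Kim v x / x =
      ∫ x in Ici ξ, Kim ν x * coshLaplace (sineTransform f) x := by
  have hint : Integrable (Function.uncurry fun v x ↦ v * f v * (Kim ν x * Kim v x / x))
      ((volume.restrict (Ioi 0)).prod (volume.restrict (Ici ξ))) := by
    refine ((hvf.mul_prod (integrableOn_Ici_Kim hξ ν)).bdd_mul (c := Kim 0 ξ / ξ)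
      (f := fun p ↦ Kim p.1 p.2 / p.2)
      (stronglyMeasurable_uncurry_Kim.measurable.div measurable_snd).aestronglyMeasurable ?_).congr
      (.of_forall fun p ↦ ?_)
    · rw [Measure.prod_restrict]
      filter_upwards [ae_restrict_mem (measurableSet_Ioi.prod measurableSet_Ici)] with p hp
      exact abs_Kim_div_le hξ hp.2 p.1
    · simp only [Function.uncurry]
      ring
  calc ∫ v in Ioi 0, v * f v * ∫ x in Ici ξ, Kim ν x * Kim v x / x
      = ∫ v in Ioi 0, ∫ x in Ici ξ, v * f v * (Kim ν x * Kim v x / x) := by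
        simp_rw [integral_const_mul]
    _ = ∫ x in Ici ξ, ∫ v in Ioi 0, v * f v * (Kim ν x * Kim v x / x) :=
        integral_integral_swap hint
    _ = ∫ x in Ici ξ, Kim ν x * ∫ v in Ioi 0, f v * coshLaplace (fun t ↦ sin (v * t)) x := by
        refine setIntegral_congr_fun measurableSet_Ici fun x hx ↦ ?_
        simp_rw [coshLaplace_sin (hξ.trans_le hx), ← integral_const_mul]
        congr! 2
        ring
    _ = ∫ x in Ici ξ, Kim ν x * coshLaplace (sineTransform f) x :=
        setIntegral_congr_fun measurableSet_Ici fun x hx ↦ by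
          simp only [integral_mul_coshLaplace_sin (hξ.trans_le hx) hf]

lemma tendsto_setIntegral_Ici {E : Type*} [NormedAddCommGroup E] [NormedSpace ℝ E] {a : ℝ}
    {g : ℝ → E} (hg : IntegrableOn g (Ioi a)) :
    Tendsto (fun ξ ↦ ∫ x in Ici ξ, g x) (𝓝[>] a) (𝓝 (∫ x in Ioi a, g x)) := by
  have hcover : AECover (volume.restrict (Ioi a)) (𝓝[>] a) Ici :=
    aecover_Ioi_of_Ici (tendsto_id.mono_left nhdsWithin_le_nhds)
  refine (hcover.integral_tendsto_of_countably_generated hg).congr' ?_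
  filter_upwards [self_mem_nhdsWithin] with ξ hξ
  rw [Measure.restrict_restrict measurableSet_Ici, inter_eq_left.2 (Ici_subset_Ioi.2 hξ)]

theorem tendsto_integral_mul_integral_Ici_Kim_mul_Kim_div (hν : ν ≠ 0)
    (hf : IntegrableOn f (Ioi 0)) (hvf : IntegrableOn (fun v ↦ v * f v) (Ioi 0))
    (htf : IntegrableOn (fun t ↦ t * sineTransform f t) (Ioi 0)) :
    Tendsto (fun ξ ↦ ∫ v in Ioi 0, v * f v * ∫ x in Ici ξ, Kim ν x * Kim v x / x) (𝓝[>] 0)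
      (𝓝 (π / sinh (π * ν) * ∫ t in Ioi 0, sineTransform f t * sin (ν * t))) := by
  rw [← integral_Kim_mul_coshLaplace hν htf]
  refine (tendsto_setIntegral_Ici (integrableOn_Kim_mul_coshLaplace ν htf)).congr' ?_
  filter_upwards [self_mem_nhdsWithin] with ξ hξ
  exact (integral_mul_integral_Ici_Kim_mul_Kim_div hξ ν hf hvf).symm

end SineTransform

section TestFunction

variable {E : Type*} [NormedAddCommGroup E] [NormedSpace ℂ E] {F : ℝ → E}

lemma integrable_fourier_of_hasCompactSupport (hF : ContDiff ℝ ∞ F) (hc : HasCompactSupport F) :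
    Integrable (𝓕 F) :=
  (𝓕 (hc.toSchwartzMap hF)).integrable

lemma integrable_smul_fourier_of_hasCompactSupport (hF : ContDiff ℝ ∞ F)
    (hc : HasCompactSupport F) : Integrable fun w ↦ w • 𝓕 F w := by
  have hmeas := (𝓕 (hc.toSchwartzMap hF)).continuous
  refine ((𝓕 (hc.toSchwartzMap hF)).integrable_pow_mul volume 1).mono'
    (Continuous.aestronglyMeasurable (continuous_id.smul hmeas)) (.of_forall fun w ↦ ?_)
  rw [norm_smul, pow_one]
  rfl

lemma contDiff_div_self {φ : ℝ → ℝ} {n : WithTop ℕ∞} (hφ : ContDiff ℝ n φ) (h0 : 0 ∉ tsupport φ) :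
    ContDiff ℝ n fun v ↦ φ v / v := by
  refine contDiff_iff_contDiffAt.2 fun v ↦ ?_
  rcases eq_or_ne v 0 with rfl | hv
  · refine (contDiffAt_const (c := 0)).congr_of_eventuallyEq ?_
    filter_upwards [notMem_tsupport_iff_eventuallyEq.1 h0] with w hw
    simp [hw]
  · exact hφ.contDiffAt.div contDiffAt_id hv

end TestFunction

section SineInversion

variable {f : ℝ → ℝ}

lemma sineTransform_neg (f : ℝ → ℝ) (t : ℝ) : sineTransform f (-t) = -sineTransform f t := by
  simp only [sineTransform, mul_neg, sin_neg, integral_neg]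

lemma sineTransform_two_pi_mul (hf : Integrable f) (hf0 : ∀ v ≤ 0, f v = 0) (w : ℝ) :
    sineTransform f (2 * π * w) = -(𝓕 (fun v ↦ (f v : ℂ)) w).im := by
  have hint : Integrable fun v : ℝ ↦ Complex.exp (↑(-2 * π * v * w) * Complex.I) • (f v : ℂ) :=
    hf.ofReal.bdd_mul (c := 1) (by fun_prop) <| .of_forall fun v ↦ by
      rw [Complex.norm_exp_ofReal_mul_I]
  have hsupp : ∀ v ∉ Ioi 0, f v * sin (v * (2 * π * w)) = 0 := fun v hv ↦ by
    rw [hf0 v (not_lt.1 hv), zero_mul]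
  rw [fourier_real_eq_integral_exp_smul, ← RCLike.im_eq_complex_im, ← integral_im hint,
    ← integral_neg, sineTransform, setIntegral_eq_integral_of_forall_compl_eq_zero hsupp]
  congr with v
  rw [smul_eq_mul, RCLike.im_eq_complex_im, Complex.im_mul_ofReal, Complex.exp_ofReal_mul_I_im,
    show -2 * π * v * w = -(v * (2 * π * w)) by ring, sin_neg]
  ring

lemma integrable_mul_sineTransform (hf : Integrable f) (hf0 : ∀ v ≤ 0, f v = 0)
    (hF : Integrable fun w ↦ w • 𝓕 (fun v ↦ (f v : ℂ)) w) :
    Integrable fun t ↦ t * sineTransform f t := by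
  have hpi : 2 * π ≠ 0 := by positivity
  refine ((hF.comp_div hpi).im.const_mul (-(2 * π))).congr (.of_forall fun t ↦ ?_)
  have ht := sineTransform_two_pi_mul hf hf0 (t / (2 * π))
  rw [mul_div_cancel₀ t hpi] at ht
  simp only [ht, RCLike.im_eq_complex_im, Complex.smul_im, smul_eq_mul]
  field_simp

lemma integral_sineTransform_two_pi_mul_mul_sin (hc : Continuous f) (hf : Integrable f)
    (hF : Integrable (𝓕 fun v ↦ (f v : ℂ))) (hf0 : ∀ v ≤ 0, f v = 0) {y : ℝ} (hy : 0 ≤ y) :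
    ∫ w, sineTransform f (2 * π * w) * sin (y * (2 * π * w)) = f y / 2 := by
  set F : ℝ → ℂ := fun v ↦ (f v : ℂ)
  have hint (u : ℝ) : Integrable fun w ↦ Complex.exp (↑(2 * π * (w * u)) * Complex.I) • 𝓕 F w :=
    hF.bdd_mul (c := 1) (by fun_prop) (.of_forall fun w ↦ by rw [Complex.norm_exp_ofReal_mul_I])
  have hinv (u : ℝ) : F u = ∫ w, Complex.exp (↑(2 * π * (w * u)) * Complex.I) • 𝓕 F w := by
    rw [← congrFun ((by fun_prop : Continuous F).fourierInv_fourier_eq hf.ofReal hF) u,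
      fourierInv_eq']
    simp [mul_comm]
  have hodd : (f y : ℂ) = ∫ w, (Complex.exp (↑(2 * π * (w * y)) * Complex.I) • 𝓕 F w -
      Complex.exp (↑(2 * π * (w * -y)) * Complex.I) • 𝓕 F w) := by
    rw [integral_sub (hint y) (hint (-y)), ← hinv, ← hinv]
    simp [F, hf0 (-y) (by linarith)]
  have hre := congrArg RCLike.re hodd
  rw [← integral_re (by exact (hint y).sub (hint (-y))), RCLike.re_eq_complex_re,
    Complex.ofReal_re] at hre
  rw [hre, ← integral_div]
  congr with w
  rw [sineTransform_two_pi_mul hf hf0, show 2 * π * (w * -y) = -(2 * π * (w * y)) by ring,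
    show y * (2 * π * w) = 2 * π * (w * y) by ring]
  simp only [smul_eq_mul, Complex.sub_re, Complex.mul_re,
    Complex.exp_ofReal_mul_I_re, Complex.exp_ofReal_mul_I_im, sin_neg, cos_neg]
  ring

lemma integral_Ioi_sineTransform_mul_sin (hc : Continuous f) (hf : Integrable f)
    (hF : Integrable (𝓕 fun v ↦ (f v : ℂ))) (hf0 : ∀ v ≤ 0, f v = 0) {y : ℝ} (hy : 0 ≤ y) :
    ∫ t in Ioi 0, sineTransform f t * sin (y * t) = π / 2 * f y := by
  have heven (t : ℝ) :
      sineTransform f |t| * sin (y * |t|) = sineTransform f t * sin (y * t) := by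
    rcases abs_choice t with h | h <;> simp [h, sineTransform_neg]
  have hline := integral_sineTransform_two_pi_mul_mul_sin hc hf hF hf0 hy
  have hhalf := integral_comp_abs (f := fun t ↦ sineTransform f t * sin (y * t))
  simp_rw [heven] at hhalf
  rw [Measure.integral_comp_mul_left (fun t ↦ sineTransform f t * sin (y * t)), hhalf,
    abs_of_pos (by positivity), smul_eq_mul] at hline
  field_simp at hline ⊢
  linarith

lemma integrable_mul_sineTransform_of_hasCompactSupport (hf : ContDiff ℝ ∞ f)
    (hc : HasCompactSupport f) (hf0 : ∀ v ≤ 0, f v = 0) :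
    Integrable fun t ↦ t * sineTransform f t :=
  integrable_mul_sineTransform (hf.continuous.integrable_of_hasCompactSupport hc) hf0 <|
    integrable_smul_fourier_of_hasCompactSupport (Complex.ofRealCLM.contDiff.comp hf)
      (hc.comp_left Complex.ofReal_zero)

lemma integral_Ioi_sineTransform_mul_sin_of_hasCompactSupport (hf : ContDiff ℝ ∞ f)
    (hc : HasCompactSupport f) (hf0 : ∀ v ≤ 0, f v = 0) {y : ℝ} (hy : 0 ≤ y) :
    ∫ t in Ioi 0, sineTransform f t * sin (y * t) = π / 2 * f y :=
  integral_Ioi_sineTransform_mul_sin hf.continuous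
    (hf.continuous.integrable_of_hasCompactSupport hc)
    (integrable_fourier_of_hasCompactSupport (Complex.ofRealCLM.contDiff.comp hf)
      (hc.comp_left Complex.ofReal_zero)) hf0 hy

end SineInversion

theorem macdonald_orthogonality (ν : ℝ) (hν : 0 < ν) (φ : ℝ → ℝ)
    (hφ : ContDiff ℝ (⊤ : ℕ∞) φ) (hφc : HasCompactSupport φ)
    (hsupp : tsupport φ ⊆ Set.Ioi (0 : ℝ)) :
    Tendsto (fun ξ : ℝ =>
        ∫ ν' in Set.Ioi (0 : ℝ), φ ν' * ∫ x in Set.Ici ξ, Kim ν x * Kim ν' x / x)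
      (nhdsWithin 0 (Set.Ioi 0)) (nhds (π ^ 2 / (2 * ν * Real.sinh (π * ν)) * φ ν)) := by
  set f : ℝ → ℝ := fun v ↦ φ v / v
  have hφ0 (v : ℝ) (hv : v ≤ 0) : φ v = 0 :=
    image_eq_zero_of_notMem_tsupport fun h ↦ hv.not_gt (hsupp h)
  have hf0 (v : ℝ) (hv : v ≤ 0) : f v = 0 := by simp [f, hφ0 v hv]
  have hφf (v : ℝ) : φ v = v * f v := (mul_div_cancel_of_imp' fun h ↦ hφ0 v h.le).symm
  have hf : ContDiff ℝ ∞ f := contDiff_div_self hφ fun h ↦ lt_irrefl (0 : ℝ) (hsupp h)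
  have hfc : HasCompactSupport f := hφc.mul_right
  have hvf : Integrable fun v ↦ v * f v := by
    simpa only [← hφf] using hφ.continuous.integrable_of_hasCompactSupport hφc
  have hlim := tendsto_integral_mul_integral_Ici_Kim_mul_Kim_div hν.ne'
    (hf.continuous.integrable_of_hasCompactSupport hfc).integrableOn hvf.integrableOn
    (integrable_mul_sineTransform_of_hasCompactSupport hf hfc hf0).integrableOn
  rw [integral_Ioi_sineTransform_mul_sin_of_hasCompactSupport hf hfc hf0 hν.le] at hlim
  simp_rw [hφf]
  convert hlim using 2
  field_simp
end
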